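/- arXiv:2303.17172 — 2 statements merged into one kernel-verified Lean document; each statement's English description precedes it below -/
import Mathlib

section
/- Let M be a 4-divisible multiset of points in PG(v-1,2) of cardinality 13. Then either M = χ_E + 2·χ_L for a plane E and a line L, or there exists a projective base B_5 of size 5 and a point C outside its span such that M(C)=3, M(Q)=1 for every point Q ≠ C lying on a line through C and a point of B_5, and M(Q)=0 otherwise. -/
open scoped Classical

noncomputable def MVal {F V : Type*} [Field F] [AddCommGroup V] [Module F V]
    (M : Projectivization F V → ℕ) (K : Submodule F V) : ℕ :=
  ∑ᶠ P ∈ {P : Projectivization F V | P.submodule ≤ K}, M P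

def IsDivisible {F V : Type*} [Field F] [AddCommGroup V] [Module F V] (Δ : ℕ)
    (M : Projectivization F V → ℕ) : Prop :=
  ∀ H : Submodule F V, Module.finrank F H + 1 = Module.finrank F V →
    MVal M H ≡ MVal M ⊤ [MOD Δ]

def IsSpanning {F V : Type*} [Field F] [AddCommGroup V] [Module F V]
    (M : Projectivization F V → ℕ) : Prop :=
  (⨆ P ∈ {P : Projectivization F V | 0 < M P}, P.submodule) = ⊤

def gaussNum (q k : ℕ) : ℕ := ∑ i ∈ Finset.range k, q ^ i

def IsProjBase {F V : Type*} [Field F] [AddCommGroup V] [Module F V]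
    (n : ℕ) (B : Finset (Projectivization F V)) : Prop :=
  B.card = n ∧ ∀ T ⊆ B, T.card = n - 1 →
    Module.finrank F ((⨆ P ∈ T, Projectivization.submodule P) : Submodule F V) = n - 1

open Module (Dual)

/-!
Read over `ZMod 2`, the multiset of points becomes a multiset `s` of thirteen nonzero vectors, and
the numbers of members off the various hyperplanes are the weights of a doubly even binary code of
length 13. A maximal doubly even code of this length has dimension at least five, so `s` is the
image under a linear map of a four-divisible multiset spanning a space of dimension at least five.

In such a space the only nonzero weights are 4 and 8, and the second moment of the weights yields a
vector `p` of multiplicity one together with four functionals of weight 4 that are nonzero at `p`.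
Any two of them have exactly one further common vector in their supports. If this vector is always
the same `q`, each of the supports consists of pairs `x`, `x + (p + q)`, and `s` is a triple cone
with vertex `p + q`. Otherwise the supports of three of the functionals contain seven vectors of an
affine solid. The remaining six vectors together with three copies of the eighth vector of the solid
would form a four-divisible multiset of cardinality nine, which does not exist, unless the eighth
vector is zero; then the seven vectors are a plane and the other six a line taken twice.

A linear image of either configuration is again of one of the two types, since a triple cone whose
base degenerates modulo the vertex is itself a plane plus twice a line.
-/

lemma zmod_two_eq_zero_or_eq_one (a : ZMod 2) : a = 0 ∨ a = 1 := by
  decide +revert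

lemma zmod_two_ne_zero_iff {a : ZMod 2} : ¬a = 0 ↔ a = 1 := by
  decide +revert

lemma zmod_two_ne_one_iff {a : ZMod 2} : ¬a = 1 ↔ a = 0 := by
  decide +revert

section SpanSingleton

variable {V : Type*} [AddCommGroup V] [Module (ZMod 2) V] {c x y : V}

lemma mem_span_singleton_zmod_two :
    x ∈ Submodule.span (ZMod 2) {c} ↔ x = 0 ∨ x = c := by
  rw [Submodule.mem_span_singleton]
  constructor
  · rintro ⟨a, rfl⟩
    rcases zmod_two_eq_zero_or_eq_one a with rfl | rfl <;> simp
  · rintro (rfl | rfl)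
    · exact ⟨0, zero_smul _ _⟩
    · exact ⟨1, one_smul _ _⟩

lemma add_mem_span_singleton_zmod_two_iff :
    x + y ∈ Submodule.span (ZMod 2) {c} ↔ y = x ∨ y = x + c := by
  rw [mem_span_singleton_zmod_two, ← ZModModule.sub_eq_add x y, sub_eq_zero, eq_comm (a := y),
    sub_eq_iff_comm, eq_comm (a := y), ZModModule.sub_eq_add x c]

lemma pair_add_eq_of_add_mem_span (h : x + y ∈ Submodule.span (ZMod 2) {c}) :
    ({y, y + c} : Multiset V) = {x, x + c} := by
  rcases add_mem_span_singleton_zmod_two_iff.1 h with rfl | rfl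
  · rfl
  · rw [add_assoc, ZModModule.add_self, add_zero, Multiset.pair_comm]

end SpanSingleton

section DualSeparation

variable {K V : Type*} [Field K] [AddCommGroup V] [Module K V] {c x : V}

lemma mem_span_singleton_of_forall_dual_apply_eq_zero
    (h : ∀ φ : Dual K V, φ c = 0 → φ x = 0) : x ∈ Submodule.span K {c} := by
  rw [← Subspace.forall_mem_dualAnnihilator_apply_eq_zero_iff]
  intro φ hφ
  exact h φ ((Submodule.mem_dualAnnihilator φ).1 hφ c (Submodule.mem_span_singleton_self c))

lemma eq_of_forall_dual_apply_eq_one (hc : c ≠ 0)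
    (h : ∀ φ : Dual K V, φ c = 1 → φ x = 1) : x = c := by
  obtain ⟨φ, hφ⟩ := Module.Projective.exists_dual_eq_one K hc
  have hx : x ∈ Submodule.span K {c} :=
    mem_span_singleton_of_forall_dual_apply_eq_zero fun ψ hψ => by
      simpa [h φ hφ] using h (φ + ψ) (by simp [hφ, hψ])
  obtain ⟨a, rfl⟩ := Submodule.mem_span_singleton.1 hx
  have ha : a = 1 := by simpa [hφ] using h φ hφ
  rw [ha, one_smul]

end DualSeparation

section DualWeight

variable {V : Type*} [AddCommGroup V] [Module (ZMod 2) V]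

/-- The number of members of `s`, with multiplicity, off the hyperplane `ker φ`; this is the weight
of a codeword of the binary code attached to `s`. -/
noncomputable def dualWeight (s : Multiset V) (φ : Dual (ZMod 2) V) : ℕ :=
  s.countP (φ · = 1)

@[simp]
lemma dualWeight_zero (φ : Dual (ZMod 2) V) : dualWeight 0 φ = 0 :=
  Multiset.countP_zero _

@[simp]
lemma dualWeight_add (s t : Multiset V) (φ : Dual (ZMod 2) V) :
    dualWeight (s + t) φ = dualWeight s φ + dualWeight t φ :=
  Multiset.countP_add _ s t

@[simp]
lemma dualWeight_singleton (x : V) (φ : Dual (ZMod 2) V) : dualWeight {x} φ = (φ x).val := by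
  rw [dualWeight, ← Multiset.cons_zero, Multiset.countP_cons, Multiset.countP_zero]
  generalize φ x = a
  decide +revert

@[simp]
lemma dualWeight_cons (x : V) (s : Multiset V) (φ : Dual (ZMod 2) V) :
    dualWeight (x ::ₘ s) φ = (φ x).val + dualWeight s φ := by
  rw [← Multiset.singleton_add, dualWeight_add, dualWeight_singleton]

@[simp]
lemma dualWeight_nsmul (n : ℕ) (s : Multiset V) (φ : Dual (ZMod 2) V) :
    dualWeight (n • s) φ = n * dualWeight s φ :=
  Multiset.countP_nsmul _ s n

@[simp]
lemma dualWeight_sum {ι : Type*} (I : Finset ι) (s : ι → Multiset V) (φ : Dual (ZMod 2) V) :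
    dualWeight (∑ i ∈ I, s i) φ = ∑ i ∈ I, dualWeight (s i) φ :=
  map_sum (Multiset.countPAddMonoidHom (φ · = 1)) s I

lemma dualWeight_le_card (s : Multiset V) (φ : Dual (ZMod 2) V) : dualWeight s φ ≤ s.card :=
  Multiset.countP_le_card _ s

lemma card_filter_apply_eq_zero_add_dualWeight (s : Multiset V) (φ : Dual (ZMod 2) V) :
    (s.filter (φ · = 0)).card + dualWeight s φ = s.card := by
  rw [Multiset.card_eq_countP_add_countP (φ · = 0) s, Multiset.countP_eq_card_filter, dualWeight]
  simp only [zmod_two_ne_zero_iff]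

lemma natCast_dualWeight (s : Multiset V) (φ : Dual (ZMod 2) V) :
    (dualWeight s φ : ZMod 2) = φ s.sum := by
  induction s using Multiset.induction_on with
  | empty => simp
  | cons x s ih => simp [ih]

lemma dualWeight_add_add_two_mul (s : Multiset V) (φ ψ : Dual (ZMod 2) V) :
    dualWeight s (φ + ψ) + 2 * dualWeight (s.filter (φ · = 1)) ψ
      = dualWeight s φ + dualWeight s ψ := by
  have h (a b : ZMod 2) :
      (a + b).val + 2 * (if a = 1 then b.val else 0) = a.val + b.val := by
    decide +revert
  induction s using Multiset.induction_on with
  | empty => simp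
  | cons x s ih =>
    have hx : dualWeight (if φ x = 1 then {x} else 0) ψ = if φ x = 1 then (ψ x).val else 0 := by
      split_ifs <;> simp
    rw [Multiset.filter_cons]
    simp only [dualWeight_cons, dualWeight_add, LinearMap.add_apply, hx]
    linarith [h (φ x) (ψ x)]

/-- Every hyperplane misses a multiple of four members of `s`. -/
def FourDivisible (s : Multiset V) : Prop :=
  ∀ φ : Dual (ZMod 2) V, 4 ∣ dualWeight s φ

namespace FourDivisible

variable {s : Multiset V}

lemma even_dualWeight_filter (hs : FourDivisible s) (φ ψ : Dual (ZMod 2) V) :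
    Even (dualWeight (s.filter (φ · = 1)) ψ) := by
  have := dualWeight_add_add_two_mul s φ ψ
  have := hs φ
  have := hs ψ
  have := hs (φ + ψ)
  rw [Nat.even_iff]
  omega

lemma sum_eq_zero (hs : FourDivisible s) : s.sum = 0 := by
  rw [← Module.forall_dual_apply_eq_zero_iff (ZMod 2)]
  intro φ
  rw [← natCast_dualWeight, ZMod.natCast_eq_zero_iff]
  exact (show 2 ∣ 4 by norm_num).trans (hs φ)

lemma sum_filter_apply_eq_one (hs : FourDivisible s) (φ : Dual (ZMod 2) V) :
    (s.filter (φ · = 1)).sum = 0 := by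
  rw [← Module.forall_dual_apply_eq_zero_iff (ZMod 2)]
  intro ψ
  rw [← natCast_dualWeight, ZMod.natCast_eq_zero_iff]
  exact (hs.even_dualWeight_filter φ ψ).two_dvd

lemma sum_filter_apply_eq_zero (hs : FourDivisible s) (φ : Dual (ZMod 2) V) :
    (s.filter (φ · = 0)).sum = 0 := by
  have key := congrArg Multiset.sum (Multiset.filter_add_not (φ · = 0) s)
  simp only [zmod_two_ne_zero_iff, Multiset.sum_add, hs.sum_filter_apply_eq_one,
    hs.sum_eq_zero, add_zero] at key
  exact key

lemma dualWeight_add_one_ne_card (hs : FourDivisible s) (h0 : 0 ∉ s) (φ : Dual (ZMod 2) V) :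
    dualWeight s φ + 1 ≠ s.card := by
  intro h
  have hcard := card_filter_apply_eq_zero_add_dualWeight s φ
  obtain ⟨z, hz⟩ : ∃ z, s.filter (φ · = 0) = {z} := Multiset.card_eq_one.1 (by omega)
  have hz0 := hs.sum_filter_apply_eq_zero φ
  rw [hz, Multiset.sum_singleton] at hz0
  have hmem : z ∈ s := Multiset.mem_of_mem_filter (hz ▸ Multiset.mem_singleton_self z)
  exact h0 (hz0 ▸ hmem)

end FourDivisible

end DualWeight

section Moments

variable {V : Type*} [AddCommGroup V] [Module (ZMod 2) V] [Fintype (Dual (ZMod 2) V)]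

lemma two_mul_sum_val_dual_apply {x : V} (hx : x ≠ 0) :
    2 * ∑ φ : Dual (ZMod 2) V, (φ x).val = Fintype.card (Dual (ZMod 2) V) := by
  obtain ⟨φ₀, hφ₀⟩ := Module.Projective.exists_dual_eq_one (ZMod 2) hx
  have hflip : ∀ a : ZMod 2, a.val + (a + 1).val = 1 := by decide
  calc 2 * ∑ φ : Dual (ZMod 2) V, (φ x).val
      = ∑ φ : Dual (ZMod 2) V, (φ x).val + ∑ φ : Dual (ZMod 2) V, ((φ + φ₀) x).val := by
        rw [two_mul, ← Equiv.sum_comp (Equiv.addRight φ₀)]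
        rfl
    _ = ∑ _φ : Dual (ZMod 2) V, 1 := by
        simp only [← Finset.sum_add_distrib, LinearMap.add_apply, hφ₀, hflip]
    _ = Fintype.card (Dual (ZMod 2) V) := by simp

lemma four_mul_sum_val_mul_val {x y : V} (hx : x ≠ 0) (hy : y ≠ 0) :
    4 * ∑ φ : Dual (ZMod 2) V, (φ x).val * (φ y).val
      = Fintype.card (Dual (ZMod 2) V) * (1 + if x = y then 1 else 0) := by
  have hX := two_mul_sum_val_dual_apply hx
  have hY := two_mul_sum_val_dual_apply hy
  split_ifs with hxy
  · subst hxy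
    have hsq : ∀ a : ZMod 2, a.val * a.val = a.val := by decide
    simp only [hsq]
    omega
  · have hxy0 : x + y ≠ 0 := fun h => hxy (sub_eq_zero.1 ((ZModModule.sub_eq_add x y).trans h))
    have hXY := two_mul_sum_val_dual_apply hxy0
    have hsplit : ∀ a b : ZMod 2, (a + b).val + 2 * (a.val * b.val) = a.val + b.val := by decide
    have hsum : ∑ φ : Dual (ZMod 2) V, (φ (x + y)).val
        + 2 * ∑ φ : Dual (ZMod 2) V, (φ x).val * (φ y).val
        = ∑ φ : Dual (ZMod 2) V, (φ x).val + ∑ φ : Dual (ZMod 2) V, (φ y).val := by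
      simp only [Finset.mul_sum, ← Finset.sum_add_distrib, map_add, hsplit]
    omega

lemma two_mul_sum_dualWeight {s : Multiset V} (h0 : 0 ∉ s) :
    2 * ∑ φ, dualWeight s φ = Fintype.card (Dual (ZMod 2) V) * s.card := by
  induction s using Multiset.induction_on with
  | empty => simp
  | cons x s ih =>
    rw [Multiset.mem_cons, not_or] at h0
    simp only [dualWeight_cons, Finset.sum_add_distrib, mul_add, ih h0.2,
      two_mul_sum_val_dual_apply (Ne.symm h0.1), Multiset.card_cons]
    ring

lemma four_mul_sum_val_mul_dualWeight {s : Multiset V} (h0 : 0 ∉ s) {p : V} (hp : p ≠ 0) :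
    4 * ∑ φ : Dual (ZMod 2) V, (φ p).val * dualWeight s φ
      = Fintype.card (Dual (ZMod 2) V) * (s.card + s.count p) := by
  induction s using Multiset.induction_on with
  | empty => simp
  | cons x s ih =>
    rw [Multiset.mem_cons, not_or] at h0
    simp only [dualWeight_cons, Finset.sum_add_distrib, mul_add, ih h0.2,
      four_mul_sum_val_mul_val hp (Ne.symm h0.1), Multiset.card_cons, Multiset.count_cons]
    ring

lemma four_mul_sum_dualWeight_sq {s : Multiset V} (h0 : 0 ∉ s) :
    4 * ∑ φ, dualWeight s φ ^ 2
      = Fintype.card (Dual (ZMod 2) V) * (s.card ^ 2 + (s.map (s.count ·)).sum) := by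
  have key (t : Multiset V) (ht : 0 ∉ t) :
      4 * ∑ φ, dualWeight t φ * dualWeight s φ
        = Fintype.card (Dual (ZMod 2) V) * (t.card * s.card + (t.map (s.count ·)).sum) := by
    induction t using Multiset.induction_on with
    | empty => simp
    | cons x t ih =>
      rw [Multiset.mem_cons, not_or] at ht
      simp only [dualWeight_cons, add_mul, Finset.sum_add_distrib, mul_add, ih ht.2,
        four_mul_sum_val_mul_dualWeight h0 (Ne.symm ht.1), Multiset.card_cons, Multiset.map_cons,
        Multiset.sum_cons]
      ring
  simpa only [sq] using key s h0

end Moments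

section SmallCardinality

variable {V : Type*} [AddCommGroup V] [Module (ZMod 2) V] {s : Multiset V}

lemma FourDivisible.card_ne_nine [Finite (Dual (ZMod 2) V)] (hs : FourDivisible s)
    (h0 : 0 ∉ s) : s.card ≠ 9 := by
  intro hcard
  have := Fintype.ofFinite (Dual (ZMod 2) V)
  have hle (φ : Dual (ZMod 2) V) : dualWeight s φ ≤ 4 := by
    have := hs φ
    have := dualWeight_le_card s φ
    have := hs.dualWeight_add_one_ne_card h0 φ
    omega
  have hsum : ∑ φ, dualWeight s φ ≤ Fintype.card (Dual (ZMod 2) V) * 4 := by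
    simpa using Finset.sum_le_card_nsmul Finset.univ (dualWeight s) 4 fun φ _ => hle φ
  have hmoment := two_mul_sum_dualWeight h0
  have hpos : 0 < Fintype.card (Dual (ZMod 2) V) := Fintype.card_pos
  rw [hcard] at hmoment
  omega

lemma FourDivisible.filter_apply_eq_zero_eq_pair (hs : FourDivisible s) {φ : Dual (ZMod 2) V}
    (hφ : dualWeight s φ + 2 = s.card) : ∃ d, s.filter (φ · = 0) = {d, d} := by
  have hcard := card_filter_apply_eq_zero_add_dualWeight s φ
  obtain ⟨d, e, hde⟩ := Multiset.card_eq_two.1 (show (s.filter (φ · = 0)).card = 2 by omega)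
  have hsum := hs.sum_filter_apply_eq_zero φ
  rw [hde] at hsum
  have hed : e = d := by
    rw [Multiset.insert_eq_cons, Multiset.sum_cons, Multiset.sum_singleton,
      ← ZModModule.sub_eq_add, sub_eq_zero] at hsum
    exact hsum.symm
  exact ⟨d, hed ▸ hde⟩

lemma filter_add_filter_add_filter_add_apply_eq_zero {φ ψ : Dual (ZMod 2) V}
    (h : ∀ x ∈ s, φ x = 0 → ψ x ≠ 0) :
    s.filter (φ · = 0) + s.filter (ψ · = 0) + s.filter ((φ + ψ) · = 0) = s := by
  have hone : ∀ a b : ZMod 2, (a = 0 → b ≠ 0) → (a = 0 ∧ ¬ b = 0 ∧ ¬ a + b = 0) ∨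
      (¬ a = 0 ∧ b = 0 ∧ ¬ a + b = 0) ∨ (¬ a = 0 ∧ ¬ b = 0 ∧ a + b = 0) := by decide
  induction s using Multiset.induction_on with
  | empty => simp
  | cons x s ih =>
    rw [Multiset.forall_mem_cons] at h
    conv_rhs => rw [← ih h.2]
    rcases hone _ _ h.1 with ⟨h₁, h₂, h₃⟩ | ⟨h₁, h₂, h₃⟩ | ⟨h₁, h₂, h₃⟩ <;>
      simp [h₁, h₂, h₃]

lemma FourDivisible.eq_add_of_pair_add_pair_add_pair {d e f : V}
    (h : FourDivisible ({d, d} + {e, e} + {f, f})) : f = d + e := by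
  have hval : ∀ a b c : ZMod 2,
      4 ∣ a.val + a.val + (b.val + b.val) + (c.val + c.val) → c = a + b := by decide
  rw [← sub_eq_zero, ← Module.forall_dual_apply_eq_zero_iff (ZMod 2)]
  intro φ
  have hφ := h φ
  simp only [dualWeight_add, Multiset.insert_eq_cons, dualWeight_cons, dualWeight_singleton] at hφ
  rw [map_sub, map_add, sub_eq_zero]
  exact hval (φ d) (φ e) (φ f) hφ

lemma FourDivisible.eq_of_card_eq_six (hs : FourDivisible s) (h0 : 0 ∉ s) (hcard : s.card = 6) :
    ∃ d e : V, s = {d, d, e, e, d + e, d + e} := by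
  have hweight (φ : Dual (ZMod 2) V) {x : V} (hx : x ∈ s) (hφ : φ x = 1) :
      dualWeight s φ + 2 = s.card := by
    have hpos : 0 < dualWeight s φ := Multiset.countP_pos.2 ⟨x, hx, hφ⟩
    have := hs φ
    have := dualWeight_le_card s φ
    omega
  have hexists (x : V) (hx : x ∈ s) : ∃ φ : Dual (ZMod 2) V, φ x = 1 :=
    Module.Projective.exists_dual_eq_one (ZMod 2) (ne_of_mem_of_not_mem hx h0)
  obtain ⟨x, hx⟩ := Multiset.card_pos_iff_exists_mem.1 (show 0 < s.card by omega)
  obtain ⟨φ, hφ⟩ := hexists x hx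
  obtain ⟨d, hd⟩ := hs.filter_apply_eq_zero_eq_pair (hweight φ hx hφ)
  have hmem_iff (y : V) : y ∈ s ∧ φ y = 0 ↔ y = d := by
    rw [← Multiset.mem_filter (p := (φ · = 0)), hd]
    simp
  obtain ⟨hds, hφd⟩ := (hmem_iff d).2 rfl
  obtain ⟨ψ, hψ⟩ := hexists d hds
  obtain ⟨e, he⟩ := hs.filter_apply_eq_zero_eq_pair (hweight ψ hds hψ)
  obtain ⟨f, hf⟩ := hs.filter_apply_eq_zero_eq_pair
    (hweight (φ + ψ) hds (by rw [LinearMap.add_apply, hφd, hψ, zero_add]))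
  have hdecomp : {d, d} + {e, e} + {f, f} = s := by
    rw [← hd, ← he, ← hf]
    refine filter_add_filter_add_filter_add_apply_eq_zero fun y hy hφy => ?_
    rw [(hmem_iff y).1 ⟨hy, hφy⟩, hψ]
    exact one_ne_zero
  refine ⟨d, e, ?_⟩
  rw [← hdecomp] at hs ⊢
  rw [hs.eq_add_of_pair_add_pair_add_pair]
  rfl

end SmallCardinality

section Configurations

variable {V W : Type*} [AddCommGroup V] [Module (ZMod 2) V] [AddCommGroup W] [Module (ZMod 2) W]
  {ι : Type*} [Fintype ι]

/-- All linear combinations of the family `b` other than the trivial one. For independent `b` these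
are the points of the flat spanned by `b`, each once; this is `χ_L` for a basis of a line `L` and
`χ_E` for a basis of a plane `E`. -/
noncomputable def nonzeroCombinations [DecidableEq ι] (b : ι → V) : Multiset V :=
  (Finset.univ.erase (0 : ι → ZMod 2)).val.map (Fintype.linearCombination (ZMod 2) b)

/-- The cone with vertex `c` of multiplicity three over the family `b`: besides the vertex it has
the other two points of each line joining `c` to a `b i`. -/
def tripleCone (c : V) (b : ι → V) : Multiset V :=
  3 • {c} + ∑ i, {b i, b i + c}

lemma map_nonzeroCombinations [DecidableEq ι] (f : V →ₗ[ZMod 2] W) (b : ι → V) :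
    (nonzeroCombinations b).map f = nonzeroCombinations (f ∘ b) := by
  simp only [nonzeroCombinations, Multiset.map_map]
  refine Multiset.map_congr rfl fun g _ => ?_
  simp [Fintype.linearCombination_apply]

lemma map_tripleCone (f : V →ₗ[ZMod 2] W) (c : V) (b : ι → V) :
    (tripleCone c b).map f = tripleCone (f c) (f ∘ b) := by
  have hmap : (∑ i, ({b i, b i + c} : Multiset V)).map f
      = ∑ i, ({b i, b i + c} : Multiset V).map f :=
    map_sum (Multiset.mapAddMonoidHom f) _ _
  simp only [tripleCone, Multiset.map_add, Multiset.map_nsmul, Multiset.map_singleton, hmap]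
  simp

lemma nonzeroCombinations_pair (a b : V) : nonzeroCombinations ![a, b] = {a, b, a + b} := by
  have huniv : (Finset.univ.erase (0 : Fin 2 → ZMod 2)).val = {![1, 0], ![0, 1], ![1, 1]} := by
    decide
  rw [nonzeroCombinations, huniv]
  simp [Fintype.linearCombination_apply]

lemma nonzeroCombinations_triple (a b c : V) :
    nonzeroCombinations ![a, b, c] = {a, b, c, a + b, a + c, b + c, a + b + c} := by
  have huniv : (Finset.univ.erase (0 : Fin 3 → ZMod 2)).val = {![1, 0, 0], ![0, 1, 0], ![0, 0, 1],
      ![1, 1, 0], ![1, 0, 1], ![0, 1, 1], ![1, 1, 1]} := by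
    decide
  rw [nonzeroCombinations, huniv]
  simp [Fintype.linearCombination_apply, Fin.sum_univ_three]

lemma linearIndependent_of_zero_notMem_nonzeroCombinations [DecidableEq ι] {b : ι → V}
    (h0 : 0 ∉ nonzeroCombinations b) : LinearIndependent (ZMod 2) b := by
  rw [linearIndependent_iff_injective_fintypeLinearCombination, injective_iff_map_eq_zero]
  intro g hg
  by_contra hne
  exact h0 (Multiset.mem_map.2 ⟨g, Finset.mem_erase.2 ⟨hne, Finset.mem_univ g⟩, hg⟩)

lemma count_nonzeroCombinations [DecidableEq ι] {b : ι → V}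
    (hb : LinearIndependent (ZMod 2) b) {w : V} (hw : w ≠ 0) :
    (nonzeroCombinations b).count w
      = if w ∈ Submodule.span (ZMod 2) (Set.range b) then 1 else 0 := by
  have hnodup : (nonzeroCombinations b).Nodup :=
    Finset.nodup_map_iff_injOn.2 hb.fintypeLinearCombination_injective.injOn
  have hmem : w ∈ nonzeroCombinations b ↔ w ∈ Submodule.span (ZMod 2) (Set.range b) := by
    rw [← Fintype.range_linearCombination, LinearMap.mem_range, nonzeroCombinations,
      Multiset.mem_map]
    refine exists_congr fun g => ⟨And.right, fun hg => ⟨?_, hg⟩⟩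
    simp only [Finset.mem_val, Finset.mem_erase, Finset.mem_univ, and_true]
    rintro rfl
    exact hw (by rw [← hg, map_zero])
  simp only [Multiset.count_eq_of_nodup hnodup, hmem]

end Configurations

section CardThirteen

variable {V : Type*} [AddCommGroup V] [Module (ZMod 2) V] {s : Multiset V}

lemma eq_zero_of_dualWeight_eq_zero (hspan : Submodule.span (ZMod 2) {x | x ∈ s} = ⊤)
    {φ : Dual (ZMod 2) V} (hφ : dualWeight s φ = 0) : φ = 0 := by
  refine LinearMap.ext_on hspan fun x hx => ?_
  exact zmod_two_ne_one_iff.1 (Multiset.countP_eq_zero.1 hφ x hx)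

namespace FourDivisible

lemma dualWeight_of_card_eq_thirteen (hs : FourDivisible s) (h0 : 0 ∉ s) (hcard : s.card = 13)
    (φ : Dual (ZMod 2) V) : dualWeight s φ = 0 ∨ dualWeight s φ = 4 ∨ dualWeight s φ = 8 := by
  have := hs φ
  have := dualWeight_le_card s φ
  have := hs.dualWeight_add_one_ne_card h0 φ
  omega

lemma card_dual_mul_sum_count [Fintype (Dual (ZMod 2) V)] (hs : FourDivisible s) (h0 : 0 ∉ s)
    (hcard : s.card = 13) (hspan : Submodule.span (ZMod 2) {x | x ∈ s} = ⊤) :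
    Fintype.card (Dual (ZMod 2) V) * (s.map (s.count ·)).sum
      = 15 * Fintype.card (Dual (ZMod 2) V) + 128 := by
  have hweight (φ : Dual (ZMod 2) V) :
      dualWeight s φ ^ 2 + 32 = 12 * dualWeight s φ + if φ = 0 then 32 else 0 := by
    obtain rfl | hφ := eq_or_ne φ 0
    · simp [dualWeight]
    · have := mt (eq_zero_of_dualWeight_eq_zero hspan) hφ
      rcases hs.dualWeight_of_card_eq_thirteen h0 hcard φ with h | h | h <;> simp_all
  have hsum := Finset.sum_congr rfl fun φ (_ : φ ∈ Finset.univ) => hweight φ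
  simp only [Finset.sum_add_distrib, ← Finset.mul_sum, Finset.sum_ite_eq', Finset.mem_univ,
    if_true, Finset.sum_const, Finset.card_univ, smul_eq_mul] at hsum
  have hfirst := two_mul_sum_dualWeight h0
  have hsecond := four_mul_sum_dualWeight_sq h0
  rw [hcard] at hfirst hsecond
  linarith

lemma exists_count_eq_one [Fintype (Dual (ZMod 2) V)] (hs : FourDivisible s) (h0 : 0 ∉ s)
    (hcard : s.card = 13) (hspan : Submodule.span (ZMod 2) {x | x ∈ s} = ⊤)
    (hdual : 32 ≤ Fintype.card (Dual (ZMod 2) V)) : ∃ p ∈ s, s.count p = 1 := by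
  by_contra! hne
  have htwo : ∀ n ∈ s.map (s.count ·), 2 ≤ n := by
    intro n hn
    obtain ⟨p, hp, rfl⟩ := Multiset.mem_map.1 hn
    have := hne p hp
    have := Multiset.count_pos.2 hp
    omega
  have hsum : 26 ≤ (s.map (s.count ·)).sum := by
    simpa [hcard] using Multiset.card_nsmul_le_sum htwo
  have := hs.card_dual_mul_sum_count h0 hcard hspan
  nlinarith

lemma exists_four_dualWeight_eq_four [Fintype (Dual (ZMod 2) V)] (hs : FourDivisible s)
    (h0 : 0 ∉ s) (hcard : s.card = 13) (hspan : Submodule.span (ZMod 2) {x | x ∈ s} = ⊤)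
    (hdual : 32 ≤ Fintype.card (Dual (ZMod 2) V)) {p : V} (hp : s.count p = 1) :
    ∃ φ : Fin 4 → Dual (ZMod 2) V, Function.Injective φ ∧
      ∀ i, φ i p = 1 ∧ dualWeight s (φ i) = 4 := by
  have hp0 : p ≠ 0 := ne_of_mem_of_not_mem (Multiset.count_pos.1 (by omega)) h0
  let T : Finset (Dual (ZMod 2) V) := {φ | φ p = 1 ∧ dualWeight s φ = 4}
  have hle (φ : Dual (ZMod 2) V) :
      8 * (φ p).val ≤ (φ p).val * dualWeight s φ + if φ ∈ T then 4 else 0 := by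
    obtain hφp | hφp := zmod_two_eq_zero_or_eq_one (φ p)
    · simp [hφp]
    · have hne : dualWeight s φ ≠ 0 := fun h => by
        simp [eq_zero_of_dualWeight_eq_zero hspan h] at hφp
      rcases hs.dualWeight_of_card_eq_thirteen h0 hcard φ with h | h | h <;>
        simp_all [T, ZMod.val_one]
  have hsum := Finset.sum_le_sum fun φ (_ : φ ∈ Finset.univ) => hle φ
  simp only [Finset.sum_add_distrib, ← Finset.mul_sum, Finset.sum_ite_mem, Finset.univ_inter,
    Finset.sum_const, smul_eq_mul] at hsum
  have hfirst := two_mul_sum_val_dual_apply hp0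
  have hsecond := four_mul_sum_val_mul_dualWeight h0 hp0
  rw [hcard, hp] at hsecond
  obtain ⟨U, hUT, hU⟩ := Finset.exists_subset_card_eq (show 4 ≤ T.card by omega)
  let e := U.equivFinOfCardEq hU
  refine ⟨fun i => e.symm i, Subtype.val_injective.comp e.symm.injective, fun i => ?_⟩
  simpa [T] using hUT (e.symm i).2

lemma exists_filter_filter_eq_pair (hs : FourDivisible s)
    (hspan : Submodule.span (ZMod 2) {x | x ∈ s} = ⊤) {p : V} (hp : s.count p = 1)
    {φ ψ : Dual (ZMod 2) V} (hφψ : φ ≠ ψ) (hφ : φ p = 1 ∧ dualWeight s φ = 4)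
    (hψ : ψ p = 1 ∧ dualWeight s ψ = 4) :
    ∃ q ≠ p, (s.filter (φ · = 1)).filter (ψ · = 1) = {p, q} := by
  let u := (s.filter (φ · = 1)).filter (ψ · = 1)
  have hmem : p ∈ u := by
    have : p ∈ s := Multiset.count_pos.1 (by omega)
    simp [u, this, hφ.1, hψ.1]
  have hcount : u.count p ≤ 1 :=
    hp ▸ Multiset.count_le_of_le p ((Multiset.filter_le _ _).trans (Multiset.filter_le _ _))
  have hcard : u.card = 2 := by
    have hu : u.card = dualWeight (s.filter (φ · = 1)) ψ :=
      (Multiset.countP_eq_card_filter _ _).symm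
    have heven := hs.even_dualWeight_filter φ ψ
    rw [Nat.even_iff, ← hu] at heven
    have hadd := dualWeight_add_add_two_mul s φ ψ
    rw [← hu] at hadd
    have hne : dualWeight s (φ + ψ) ≠ 0 := fun h => hφψ <| sub_eq_zero.1 <|
      (ZModModule.sub_eq_add φ ψ).trans (eq_zero_of_dualWeight_eq_zero hspan h)
    have hpos : 0 < u.card := Multiset.card_pos_iff_exists_mem.2 ⟨p, hmem⟩
    omega
  obtain ⟨v, hv⟩ := Multiset.exists_cons_of_mem hmem
  rw [hv, Multiset.card_cons] at hcard
  obtain ⟨q, rfl⟩ := Multiset.card_eq_one.1 (show v.card = 1 by omega)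
  refine ⟨q, ?_, hv⟩
  rintro rfl
  simp [hv] at hcount

end FourDivisible

end CardThirteen

lemma and_iff_of_filter_filter_eq_pair {α : Type*} {s : Multiset α} {P Q : α → Prop}
    [DecidablePred P] [DecidablePred Q] {x y z : α}
    (h : (s.filter P).filter Q = {x, y}) : z ∈ s ∧ P z ∧ Q z ↔ z = x ∨ z = y := by
  rw [← and_assoc, ← Multiset.mem_filter, ← Multiset.mem_filter, h]
  simp

section FanoCase

variable {V : Type*} [AddCommGroup V] [Module (ZMod 2) V] {s : Multiset V}

namespace FourDivisible

lemma four_dvd_dualWeight_add_val (hs : FourDivisible s) {p q a b : V} {t : Multiset V}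
    (hst : s = {p, q, a, b, p + q + a, p + q + b, p + a + b} + t) (φ : Dual (ZMod 2) V) :
    4 ∣ dualWeight t φ + 3 * (φ (q + a + b)).val := by
  -- Together with `q + a + b` the seven points form an affine solid.
  have hsolid : ∀ p q a b : ZMod 2, 4 ∣ p.val + (q.val + (a.val + (b.val + ((p + q + a).val +
      ((p + q + b).val + (p + a + b).val))))) + (q + a + b).val := by decide
  have hφ := hs φ
  simp only [hst, dualWeight_add, Multiset.insert_eq_cons, dualWeight_cons, dualWeight_singleton,
    map_add] at hφ ⊢
  have := hsolid (φ p) (φ q) (φ a) (φ b)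
  omega

lemma exists_eq_plane_add_line [Finite (Dual (ZMod 2) V)] (hs : FourDivisible s) (h0 : 0 ∉ s)
    (hcard : s.card = 13) {p q a b : V} {t : Multiset V}
    (hst : s = {p, q, a, b, p + q + a, p + q + b, p + a + b} + t) :
    ∃ d e : V, s = nonzeroCombinations ![p, q, a] + 2 • nonzeroCombinations ![d, e] := by
  have ht0 : 0 ∉ t := fun h => h0 (hst ▸ Multiset.mem_add.2 (Or.inr h))
  have htcard : t.card = 6 := by
    rw [hst] at hcard
    simpa using hcard
  have hdvd := hs.four_dvd_dualWeight_add_val hst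
  have hg : q + a + b = 0 := by
    by_contra hg
    refine FourDivisible.card_ne_nine (s := t + 3 • {q + a + b}) (fun φ => ?_) ?_ ?_
    · simpa using hdvd φ
    · simpa [ht0, Multiset.mem_nsmul] using Ne.symm hg
    · simp [htcard]
  have ht : FourDivisible t := fun φ => by simpa [hg] using hdvd φ
  obtain ⟨d, e, rfl⟩ := ht.eq_of_card_eq_six ht0 htcard
  have hb : b = q + a := by
    rw [← sub_eq_zero, ZModModule.sub_eq_add, add_comm, hg]
  have hpb : p + q + b = p + a := by
    rw [hb, add_assoc, ← add_assoc q, ZModModule.add_self, zero_add]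
  have hpa : p + a + b = p + q := by
    rw [hb, add_assoc, add_left_comm a, ZModModule.add_self, add_zero]
  refine ⟨d, e, ?_⟩
  rw [hst, hpb, hpa, hb, nonzeroCombinations_pair, nonzeroCombinations_triple, two_nsmul]
  simp only [Multiset.insert_eq_cons, ← Multiset.singleton_add]
  abel

lemma filter_apply_eq_one_eq_of_mem (hs : FourDivisible s) {φ ψ : Dual (ZMod 2) V} {p q a : V}
    (hφ : dualWeight s φ = 4) (hq : (s.filter (φ · = 1)).filter (ψ · = 1) = {p, q})
    (ha : a ∈ s.filter (φ · = 1)) (hψa : ψ a ≠ 1) :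
    s.filter (φ · = 1) = {p, q, a, p + q + a} := by
  have hcard : (s.filter (φ · = 1)).card = 4 := (Multiset.countP_eq_card_filter _ _).symm.trans hφ
  have hsplit := Multiset.filter_add_not (ψ · = 1) (s.filter (φ · = 1))
  rw [hq] at hsplit
  have hmem : a ∈ (s.filter (φ · = 1)).filter (¬ ψ · = 1) := Multiset.mem_filter.2 ⟨ha, hψa⟩
  obtain ⟨v, hv⟩ := Multiset.exists_cons_of_mem hmem
  rw [hv] at hsplit
  have hvcard : v.card = 1 := by
    rw [← hsplit] at hcard
    simpa using hcard
  obtain ⟨x, rfl⟩ := Multiset.card_eq_one.1 hvcard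
  have hsum := hs.sum_filter_apply_eq_one φ
  rw [← hsplit] at hsum
  have hx : x = p + q + a := by
    rw [← sub_eq_zero, ZModModule.sub_eq_add, ← hsum]
    simp only [Multiset.insert_eq_cons, Multiset.sum_add, Multiset.sum_cons,
      Multiset.sum_singleton]
    abel
  rw [← hsplit, hx]
  rfl

lemma exists_eq_seven_add (hs : FourDivisible s) {φ ψ χ : Dual (ZMod 2) V} {p q a b : V}
    (hφ : φ p = 1 ∧ dualWeight s φ = 4) (hψ : ψ p = 1 ∧ dualWeight s ψ = 4)
    (hχ : χ p = 1 ∧ dualWeight s χ = 4) (hap : a ≠ p) (hbp : b ≠ p) (hχq : χ q ≠ 1)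
    (hq : (s.filter (φ · = 1)).filter (ψ · = 1) = {p, q})
    (ha : (s.filter (φ · = 1)).filter (χ · = 1) = {p, a})
    (hb : (s.filter (ψ · = 1)).filter (χ · = 1) = {p, b}) :
    ∃ t, s = {p, q, a, b, p + q + a, p + q + b, p + a + b} + t := by
  obtain ⟨-, hφq, -⟩ := (and_iff_of_filter_filter_eq_pair hq).2 (Or.inr rfl)
  obtain ⟨has, hφa, hχa⟩ := (and_iff_of_filter_filter_eq_pair ha).2 (Or.inr rfl)
  obtain ⟨hbs, hψb, hχb⟩ := (and_iff_of_filter_filter_eq_pair hb).2 (Or.inr rfl)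
  have hψa : ψ a ≠ 1 := fun h =>
    (((and_iff_of_filter_filter_eq_pair hq).1 ⟨has, hφa, h⟩).resolve_left hap ▸ hχq) hχa
  have hφb : φ b ≠ 1 := fun h =>
    (((and_iff_of_filter_filter_eq_pair hq).1 ⟨hbs, h, hψb⟩).resolve_left hbp ▸ hχq) hχb
  have hφs := hs.filter_apply_eq_one_eq_of_mem hφ.2 hq (Multiset.mem_filter.2 ⟨has, hφa⟩) hψa
  have hψs := hs.filter_apply_eq_one_eq_of_mem hψ.2 (by rw [Multiset.filter_comm, hq])
    (Multiset.mem_filter.2 ⟨hbs, hψb⟩) hφb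
  have hχs := hs.filter_apply_eq_one_eq_of_mem hχ.2 (by rw [Multiset.filter_comm, ha])
    (Multiset.mem_filter.2 ⟨hbs, hχb⟩) hφb
  have hψs' : (s.filter (¬ φ · = 1)).filter (ψ · = 1) = {b, p + q + b} := by
    rw [Multiset.filter_comm, hψs]
    simp [hφ.1, hφq, zmod_two_ne_one_iff.1 hφb, ZModModule.add_self]
  have hχs' : ((s.filter (¬ φ · = 1)).filter (¬ ψ · = 1)).filter (χ · = 1) = {p + a + b} := by
    rw [Multiset.filter_comm, Multiset.filter_comm (χ · = 1), hχs]
    simp [hφ.1, hψ.1, hφa, hψb, zmod_two_ne_one_iff.1 hφb, zmod_two_ne_one_iff.1 hψa,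
      ZModModule.add_self]
  refine ⟨((s.filter (¬ φ · = 1)).filter (¬ ψ · = 1)).filter (¬ χ · = 1), ?_⟩
  conv_lhs => rw [← Multiset.filter_add_not (φ · = 1) s,
    ← Multiset.filter_add_not (ψ · = 1) (s.filter (¬ φ · = 1)),
    ← Multiset.filter_add_not (χ · = 1) ((s.filter (¬ φ · = 1)).filter (¬ ψ · = 1)),
    hφs, hψs', hχs']
  simp only [Multiset.insert_eq_cons, ← Multiset.singleton_add]
  abel

lemma exists_eq_plane_add_line_of_apply_ne_one [Finite (Dual (ZMod 2) V)] (hs : FourDivisible s)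
    (h0 : 0 ∉ s) (hcard : s.card = 13) (hspan : Submodule.span (ZMod 2) {x | x ∈ s} = ⊤) {p q : V}
    (hp : s.count p = 1) {φ ψ χ : Dual (ZMod 2) V} (hφχ : φ ≠ χ) (hψχ : ψ ≠ χ)
    (hφ : φ p = 1 ∧ dualWeight s φ = 4) (hψ : ψ p = 1 ∧ dualWeight s ψ = 4)
    (hχ : χ p = 1 ∧ dualWeight s χ = 4) (hχq : χ q ≠ 1)
    (hq : (s.filter (φ · = 1)).filter (ψ · = 1) = {p, q}) :
    ∃ a b c d e : V, s = nonzeroCombinations ![a, b, c] + 2 • nonzeroCombinations ![d, e] := by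
  obtain ⟨a, hap, ha⟩ := hs.exists_filter_filter_eq_pair hspan hp hφχ hφ hχ
  obtain ⟨b, hbp, hb⟩ := hs.exists_filter_filter_eq_pair hspan hp hψχ hψ hχ
  obtain ⟨t, hst⟩ := hs.exists_eq_seven_add hφ hψ hχ hap hbp hχq hq ha hb
  exact ⟨p, q, a, hs.exists_eq_plane_add_line h0 hcard hst⟩

end FourDivisible

end FanoCase

section SunflowerCase

lemma sum_filter_le {α ι : Type*} [Fintype ι] (s : Multiset α) (P : ι → α → Prop)
    [∀ i, DecidablePred (P i)] (h : ∀ x ∈ s, ∀ i j, P i x → P j x → i = j) :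
    ∑ i, s.filter (P i) ≤ s := by
  induction s using Multiset.induction_on with
  | empty => simp
  | cons x s ih =>
    rw [Multiset.forall_mem_cons] at h
    have hx : ∑ i, (if P i x then {x} else 0) ≤ ({x} : Multiset α) := by
      by_cases hex : ∃ i, P i x
      · obtain ⟨i, hi⟩ := hex
        have hiff (j : ι) : P j x ↔ j = i := ⟨fun hj => h.1 j i hj hi, fun hj => hj ▸ hi⟩
        simp [hiff]
      · rw [not_exists] at hex
        simp [hex]
    simpa only [Multiset.filter_cons, Finset.sum_add_distrib, Multiset.singleton_add]
      using add_le_add hx (ih h.2)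

variable {V : Type*} [AddCommGroup V] [Module (ZMod 2) V] {s : Multiset V}

namespace FourDivisible

lemma filter_apply_eq_one_eq_add (hs : FourDivisible s) {p q : V} {t : Multiset V}
    (hst : s = {p, q} + t) {φ : Dual (ZMod 2) V} (hφ : dualWeight s φ = 4) (hp : φ p = 1)
    (hq : φ q = 1) : ∃ a, t.filter (φ · = 1) = {a, a + (p + q)} := by
  have hfilter : s.filter (φ · = 1) = {p, q} + t.filter (φ · = 1) := by
    simp [hst, hp, hq]
  have hcard := (Multiset.countP_eq_card_filter _ _).symm.trans hφ
  have hsum := hs.sum_filter_apply_eq_one φ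
  rw [hfilter] at hcard hsum
  obtain ⟨a, b, hab⟩ := Multiset.card_eq_two.1
    (show (t.filter (φ · = 1)).card = 2 by simpa [add_comm 2] using hcard)
  refine ⟨a, ?_⟩
  rw [hab] at hsum ⊢
  have hb : b = a + (p + q) := by
    rw [← sub_eq_zero, ZModModule.sub_eq_add, ← hsum]
    simp only [Multiset.insert_eq_cons, Multiset.sum_add, Multiset.sum_cons,
      Multiset.sum_singleton]
    abel
  rw [hb]

/-- Evaluating divisibility at functionals with `φ c = 1` identifies `r` and at those with
`φ c = 0` identifies `p` up to `c`. -/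
lemma eq_tripleCone_of_eq_add (hs : FourDivisible s) {p c : V} (hc : c ≠ 0)
    {a : Fin 4 → V} {r : Multiset V} (hr : r.card = 3)
    (hsr : s = {p, p + c} + (∑ i, {a i, a i + c} + r)) :
    ∃ b : Fin 5 → V, ∑ i, b i = 0 ∧ s = tripleCone c b := by
  have hweight (φ : Dual (ZMod 2) V) : 4 ∣ (φ p).val + (φ (p + c)).val
      + (∑ i, ((φ (a i)).val + (φ (a i + c)).val) + dualWeight r φ) := by
    simpa [hsr, add_assoc] using hs φ
  have hrc : r = 3 • {c} := by
    rw [Multiset.nsmul_singleton, Multiset.eq_replicate]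
    refine ⟨hr, fun x hx => eq_of_forall_dual_apply_eq_one (K := ZMod 2) hc fun φ hφ => ?_⟩
    have hflip : ∀ a : ZMod 2, a.val + (a + 1).val = 1 := by decide
    have hdvd := hweight φ
    simp only [map_add, hφ, hflip, Finset.sum_const, Finset.card_univ, Fintype.card_fin,
      smul_eq_mul] at hdvd
    have hle := dualWeight_le_card r φ
    exact Multiset.countP_eq_card.1 (show dualWeight r φ = r.card by omega) x hx
  have hp : p + ∑ i, a i ∈ Submodule.span (ZMod 2) {c} := by
    refine mem_span_singleton_of_forall_dual_apply_eq_zero fun φ hφ => ?_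
    have hdvd := hweight φ
    simp only [map_add, hφ, add_zero, hrc, dualWeight_nsmul, dualWeight_singleton, ZMod.val_zero,
      mul_zero, ← two_mul, ← Finset.mul_sum, ← mul_add] at hdvd
    have heven : 2 ∣ (φ p).val + ∑ i, (φ (a i)).val := by omega
    simpa [map_add, map_sum] using (ZMod.natCast_eq_zero_iff _ 2).2 heven
  refine ⟨Fin.cons (∑ i, a i) a, ?_, ?_⟩
  · rw [Fin.sum_cons, ZModModule.add_self]
  · rw [hsr, ← pair_add_eq_of_add_mem_span hp, hrc, tripleCone, Fin.sum_univ_succ (n := 4)]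
    simp only [Fin.cons_zero, Fin.cons_succ]
    abel

lemma exists_eq_tripleCone (hs : FourDivisible s) (hcard : s.card = 13) {p q : V} (hpq : q ≠ p)
    {φ : Fin 4 → Dual (ZMod 2) V} (hφ : ∀ i, dualWeight s (φ i) = 4)
    (hφpq : ∀ i j, i ≠ j → (s.filter (φ i · = 1)).filter (φ j · = 1) = {p, q}) :
    ∃ (c : V) (b : Fin 5 → V), ∑ i, b i = 0 ∧ s = tripleCone c b := by
  have hle : {p, q} ≤ s := hφpq 0 1 (by decide) ▸
    (Multiset.filter_le _ _).trans (Multiset.filter_le _ _)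
  obtain ⟨t, hst⟩ := Multiset.le_iff_exists_add.1 hle
  have hpone (i : Fin 4) : φ i p = 1 ∧ φ i q = 1 := by
    obtain ⟨j, hj⟩ := exists_ne i
    have h (y : V) := and_iff_of_filter_filter_eq_pair (z := y) (hφpq i j hj.symm)
    exact ⟨((h p).2 (Or.inl rfl)).2.1, ((h q).2 (Or.inr rfl)).2.1⟩
  choose a ha using fun i =>
    hs.filter_apply_eq_one_eq_add hst (hφ i) (hpone i).1 (hpone i).2
  have hdisj : ∀ x ∈ t, ∀ i j, φ i x = 1 → φ j x = 1 → i = j := by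
    intro x hx i j hi hj
    by_contra hij
    have hempty := hφpq i j hij
    rw [hst, Multiset.filter_add, Multiset.filter_add] at hempty
    have hpair : (({p, q} : Multiset V).filter (φ i · = 1)).filter (φ j · = 1) = {p, q} := by
      simp [hpone]
    rw [hpair, add_eq_left] at hempty
    exact Multiset.notMem_zero x (hempty ▸ by simp [hx, hi, hj])
  obtain ⟨r, hr⟩ := Multiset.le_iff_exists_add.1 (sum_filter_le t (fun i x => φ i x = 1) hdisj)
  simp only [ha] at hr
  have hpq' : p + (p + q) = q := by rw [← add_assoc, ZModModule.add_self, zero_add]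
  refine ⟨p + q, hs.eq_tripleCone_of_eq_add (p := p) (a := a) (r := r) ?_ ?_ ?_⟩
  · rw [← ZModModule.sub_eq_add, sub_ne_zero]
    exact hpq.symm
  · rw [hst, hr] at hcard
    simp only [Multiset.insert_eq_cons, Multiset.card_add, Multiset.card_cons,
      Multiset.card_singleton, Multiset.card_sum, Finset.sum_const, Finset.card_univ,
      Fintype.card_fin, smul_eq_mul] at hcard
    omega
  · rw [hpq', ← hr, hst]

end FourDivisible

end SunflowerCase

lemma FourDivisible.plane_add_line_or_tripleCone_of_span_eq_top {V : Type*} [AddCommGroup V]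
    [Module (ZMod 2) V] [Fintype (Dual (ZMod 2) V)] {s : Multiset V} (hs : FourDivisible s)
    (h0 : 0 ∉ s) (hcard : s.card = 13) (hspan : Submodule.span (ZMod 2) {x | x ∈ s} = ⊤)
    (hdual : 32 ≤ Fintype.card (Dual (ZMod 2) V)) :
    (∃ a b c d e : V, s = nonzeroCombinations ![a, b, c] + 2 • nonzeroCombinations ![d, e]) ∨
      ∃ (c : V) (b : Fin 5 → V), ∑ i, b i = 0 ∧ s = tripleCone c b := by
  obtain ⟨p, -, hp⟩ := hs.exists_count_eq_one h0 hcard hspan hdual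
  obtain ⟨φ, hinj, hφ⟩ := hs.exists_four_dualWeight_eq_four h0 hcard hspan hdual hp
  have hpair {i j : Fin 4} (hij : i ≠ j) :=
    hs.exists_filter_filter_eq_pair hspan hp (hinj.ne hij) (hφ i) (hφ j)
  obtain ⟨q, hqp, hq⟩ := hpair (show (0 : Fin 4) ≠ 1 by decide)
  obtain ⟨hqs, hq₀, hq₁⟩ := (and_iff_of_filter_filter_eq_pair hq).2 (Or.inr rfl)
  by_cases hall : ∀ i, φ i q = 1
  · refine Or.inr (hs.exists_eq_tripleCone hcard hqp (fun i => (hφ i).2) fun i j hij => ?_)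
    obtain ⟨r, -, hr⟩ := hpair hij
    have hqr : q = r :=
      ((and_iff_of_filter_filter_eq_pair hr).1 ⟨hqs, hall i, hall j⟩).resolve_left hqp
    rw [hqr, hr]
  · obtain ⟨i, hi⟩ := not_forall.1 hall
    refine Or.inl (hs.exists_eq_plane_add_line_of_apply_ne_one h0 hcard hspan hp ?_ ?_ (hφ 0)
      (hφ 1) (hφ i) hi hq)
    · exact fun h => hi (h ▸ hq₀)
    · exact fun h => hi (h ▸ hq₁)

section DoublyEvenCodes

open Module (finrank)

lemma exists_notMem_forall_dotProduct_eq_zero {K ι : Type*} [Field K] [Fintype ι]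
    (A B : Submodule K (ι → K)) (h : finrank K A + finrank K B < Fintype.card ι) :
    ∃ z ∉ B, ∀ c ∈ A, c ⬝ᵥ z = 0 := by
  let e := dotProductEquiv K ι
  have hrank : finrank K A + finrank K (A.dualAnnihilator.comap e.toLinearMap)
      = Fintype.card ι := by
    rw [Submodule.comap_equiv_eq_map_symm, LinearEquiv.finrank_map_eq,
      Subspace.finrank_add_finrank_dualAnnihilator_eq, Module.finrank_fintype_fun_eq_card]
  obtain ⟨z, hz, hzB⟩ : ∃ z ∈ A.dualAnnihilator.comap e.toLinearMap, z ∉ B := by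
    by_contra! hle
    have := Submodule.finrank_mono (R := K) hle
    omega
  refine ⟨z, hzB, fun c hc => ?_⟩
  rw [dotProduct_comm]
  exact (Submodule.mem_dualAnnihilator _).1 hz c hc

variable {ι : Type*} [Fintype ι]

lemma hammingNorm_eq_sum_val (c : ι → ZMod 2) : hammingNorm c = ∑ i, (c i).val := by
  have h : ∀ a : ZMod 2, (if a ≠ 0 then 1 else 0) = a.val := by decide
  simp only [hammingNorm, Finset.card_filter, h]

lemma natCast_hammingNorm (c : ι → ZMod 2) : (hammingNorm c : ZMod 2) = 1 ⬝ᵥ c := by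
  simp [hammingNorm_eq_sum_val, one_dotProduct]

lemma hammingNorm_add_modEq {c d : ι → ZMod 2} (h : c ⬝ᵥ d = 0) :
    hammingNorm (c + d) ≡ hammingNorm c + hammingNorm d [MOD 4] := by
  have hab : ∀ a b : ZMod 2, (a + b).val + 2 * (a.val * b.val) = a.val + b.val := by decide
  have hadd : hammingNorm (c + d) + 2 * ∑ i, (c i).val * (d i).val
      = hammingNorm c + hammingNorm d := by
    simp only [hammingNorm_eq_sum_val, Finset.mul_sum, ← Finset.sum_add_distrib, Pi.add_apply, hab]
  have heven : 2 ∣ ∑ i, (c i).val * (d i).val := by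
    rw [← ZMod.natCast_eq_zero_iff]
    simpa [dotProduct] using h
  rw [Nat.ModEq]
  omega

/-- A binary linear code is doubly even if all its weights are multiples of four. Extending such
codes amounts to lifting four-divisible multisets to spaces of larger dimension. -/
def DoublyEven (C : Submodule (ZMod 2) (ι → ZMod 2)) : Prop :=
  ∀ c ∈ C, 4 ∣ hammingNorm c

namespace DoublyEven

variable {C : Submodule (ZMod 2) (ι → ZMod 2)}

lemma sup_span_singleton (hC : DoublyEven C) {z : ι → ZMod 2} (hz : 4 ∣ hammingNorm z)
    (horth : ∀ c ∈ C, c ⬝ᵥ z = 0) : DoublyEven (C ⊔ Submodule.span (ZMod 2) {z}) := by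
  intro w hw
  obtain ⟨c, hc, y, hy, rfl⟩ := Submodule.mem_sup.1 hw
  obtain ⟨a, rfl⟩ := Submodule.mem_span_singleton.1 hy
  rcases zmod_two_eq_zero_or_eq_one a with rfl | rfl
  · simpa using hC c hc
  · rw [one_smul]
    exact ((hammingNorm_add_modEq (horth c hc)).dvd_iff dvd_rfl).2 (dvd_add (hC c hc) hz)

/-- Of two even orthogonal vectors `u` and `v`, one of `u`, `v`, `u + v` is doubly even. -/
lemma exists_notMem_of_two_mul_finrank_add_four_le
    (hcard : 2 * finrank (ZMod 2) C + 4 ≤ Fintype.card ι) :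
    ∃ z ∉ C, 4 ∣ hammingNorm z ∧ ∀ c ∈ C, c ⬝ᵥ z = 0 := by
  have finrank_sup_span_le (A : Submodule (ZMod 2) (ι → ZMod 2)) (x : ι → ZMod 2) :
      finrank (ZMod 2) ↥(A ⊔ Submodule.span (ZMod 2) {x}) ≤ finrank (ZMod 2) A + 1 :=
    (Submodule.finrank_add_le_finrank_add_finrank _ _).trans
      (Nat.add_le_add_left (by simpa using finrank_span_le_card (R := ZMod 2) {x}) _)
  have even_of_orthogonal {x : ι → ZMod 2} (hx : 1 ⬝ᵥ x = 0) : 2 ∣ hammingNorm x :=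
    (ZMod.natCast_eq_zero_iff _ 2).1 ((natCast_hammingNorm x).trans hx)
  let C₁ := C ⊔ Submodule.span (ZMod 2) {1}
  have hCC₁ : C ≤ C₁ := le_sup_left
  have h1C₁ : (1 : ι → ZMod 2) ∈ C₁ :=
    Submodule.mem_sup_right (Submodule.mem_span_singleton_self _)
  have hC₁ : finrank (ZMod 2) C₁ ≤ finrank (ZMod 2) C + 1 := finrank_sup_span_le C 1
  obtain ⟨u, huC, hu⟩ := exists_notMem_forall_dotProduct_eq_zero C₁ C (by omega)
  obtain ⟨v, hvC, hv⟩ := exists_notMem_forall_dotProduct_eq_zero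
    (C₁ ⊔ Submodule.span (ZMod 2) {u}) (C ⊔ Submodule.span (ZMod 2) {u}) (by
      have := finrank_sup_span_le C₁ u
      have := finrank_sup_span_le C u
      omega)
  have hv₁ : ∀ c ∈ C₁, c ⬝ᵥ v = 0 := fun c hc => hv c (Submodule.mem_sup_left hc)
  have huspan := Submodule.mem_span_singleton_self (R := ZMod 2) u
  have huv := hammingNorm_add_modEq (hv u (Submodule.mem_sup_right huspan))
  have hueven := even_of_orthogonal (hu 1 h1C₁)
  have hveven := even_of_orthogonal (hv₁ 1 h1C₁)
  by_cases hu4 : 4 ∣ hammingNorm u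
  · exact ⟨u, huC, hu4, fun c hc => hu c (hCC₁ hc)⟩
  by_cases hv4 : 4 ∣ hammingNorm v
  · exact ⟨v, fun h => hvC (Submodule.mem_sup_left h), hv4, fun c hc => hv₁ c (hCC₁ hc)⟩
  refine ⟨u + v, fun h => hvC ?_, ?_, fun c hc => ?_⟩
  · simpa using Submodule.sub_mem _ (Submodule.mem_sup_left h) (Submodule.mem_sup_right huspan)
  · rw [Nat.ModEq] at huv
    omega
  · rw [dotProduct_add, hu c (hCC₁ hc), hv₁ c (hCC₁ hc), add_zero]

lemma exists_le_card_lt_two_mul_finrank_add_four (hC : DoublyEven C) :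
    ∃ D, C ≤ D ∧ DoublyEven D ∧ Fintype.card ι < 2 * finrank (ZMod 2) D + 4 := by
  obtain ⟨D, hCD, hD⟩ := Finite.exists_le_maximal (p := DoublyEven) hC
  refine ⟨D, hCD, hD.prop, ?_⟩
  by_contra! hcard
  obtain ⟨z, hzD, hz, horth⟩ := exists_notMem_of_two_mul_finrank_add_four_le hcard
  exact hzD (hD.le_of_ge (hD.prop.sup_span_singleton hz horth) le_sup_left
    (Submodule.mem_sup_right (Submodule.mem_span_singleton_self z)))

end DoublyEven

end DoublyEvenCodes

section Lifting

open Module (finrank)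

variable {V : Type*} [AddCommGroup V] [Module (ZMod 2) V]

lemma dualWeight_univ_map {ι : Type*} [Fintype ι] (x : ι → V) (φ : Dual (ZMod 2) V) :
    dualWeight (Finset.univ.val.map x) φ = hammingNorm (fun i => φ (x i)) := by
  rw [dualWeight, Multiset.countP_map, hammingNorm]
  simp only [ne_eq, zmod_two_ne_zero_iff]
  rfl

/-- The multiset attached to a binary linear code: the coordinate functionals on `D`. -/
noncomputable def coordinateMultiset {ι : Type*} [Fintype ι]
    (D : Submodule (ZMod 2) (ι → ZMod 2)) : Multiset (Dual (ZMod 2) D) :=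
  Finset.univ.val.map fun i => LinearMap.proj i ∘ₗ D.subtype

variable {ι : Type*} [Fintype ι] {D : Submodule (ZMod 2) (ι → ZMod 2)}

lemma dualWeight_coordinateMultiset_eval (c : D) :
    dualWeight (coordinateMultiset D) (Dual.eval (ZMod 2) D c) = hammingNorm (c : ι → ZMod 2) :=
  dualWeight_univ_map _ _

lemma DoublyEven.fourDivisible_coordinateMultiset (hD : DoublyEven D) :
    FourDivisible (coordinateMultiset D) := by
  intro Φ
  obtain ⟨c, rfl⟩ := (Module.evalEquiv (ZMod 2) D).surjective Φ
  rw [Module.evalEquiv_apply, dualWeight_coordinateMultiset_eval]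
  exact hD c c.2

lemma span_coordinateMultiset (D : Submodule (ZMod 2) (ι → ZMod 2)) :
    Submodule.span (ZMod 2) {x | x ∈ coordinateMultiset D} = ⊤ := by
  by_contra hne
  obtain ⟨Φ, hΦ, hker⟩ := Submodule.exists_le_ker_of_lt_top _ (lt_top_iff_ne_top.2 hne)
  obtain ⟨c, rfl⟩ := (Module.evalEquiv (ZMod 2) D).surjective Φ
  have hc : c = 0 := by
    ext i
    exact hker (Submodule.subset_span (Multiset.mem_map_of_mem _ (Finset.mem_univ_val i)))
  exact hΦ (by rw [hc, map_zero])

lemma FourDivisible.exists_doublyEven_map_coordinateMultiset_eq [FiniteDimensional (ZMod 2) V]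
    {x : ι → V} (hx : FourDivisible (Finset.univ.val.map x)) :
    ∃ (D : Submodule (ZMod 2) (ι → ZMod 2)) (f : Dual (ZMod 2) D →ₗ[ZMod 2] V),
      DoublyEven D ∧ Fintype.card ι < 2 * finrank (ZMod 2) D + 4 ∧
        (coordinateMultiset D).map f = Finset.univ.val.map x := by
  let evaluation : Dual (ZMod 2) V →ₗ[ZMod 2] ι → ZMod 2 :=
    LinearMap.pi fun i => Dual.eval (ZMod 2) V (x i)
  have hrange : DoublyEven (LinearMap.range evaluation) := by
    rintro _ ⟨φ, rfl⟩
    exact dualWeight_univ_map x φ ▸ hx φ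
  obtain ⟨D, hle, hD, hcard⟩ := hrange.exists_le_card_lt_two_mul_finrank_add_four
  let toCode := evaluation.codRestrict D fun φ => hle (LinearMap.mem_range_self _ φ)
  refine ⟨D, (Module.evalEquiv (ZMod 2) V).symm ∘ₗ toCode.dualMap, hD, hcard, ?_⟩
  rw [coordinateMultiset, Multiset.map_map]
  exact Multiset.map_congr rfl fun i _ => (LinearEquiv.symm_apply_eq _).2 rfl

lemma FourDivisible.plane_add_line_or_tripleCone [FiniteDimensional (ZMod 2) V]
    {s : Multiset V} (hs : FourDivisible s) (h0 : 0 ∉ s) (hcard : s.card = 13) :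
    (∃ a b c d e : V, s = nonzeroCombinations ![a, b, c] + 2 • nonzeroCombinations ![d, e]) ∨
      ∃ (c : V) (b : Fin 5 → V), ∑ i, b i = 0 ∧ s = tripleCone c b := by
  obtain ⟨ι, _, x, rfl⟩ : ∃ (ι : Type _) (_ : Fintype ι) (x : ι → V), s = Finset.univ.val.map x :=
    ⟨s, inferInstance, (↑), (Multiset.map_univ_coe s).symm⟩
  obtain ⟨D, f, hD, hrank, hmap⟩ := hs.exists_doublyEven_map_coordinateMultiset_eq
  have : Finite (Dual (ZMod 2) (Dual (ZMod 2) D)) := Module.finite_of_finite (ZMod 2)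
  have := Fintype.ofFinite (Dual (ZMod 2) (Dual (ZMod 2) D))
  have hdual : 32 ≤ Fintype.card (Dual (ZMod 2) (Dual (ZMod 2) D)) := by
    rw [Multiset.card_map, Finset.card_val, Finset.card_univ] at hcard
    rw [Module.card_eq_pow_finrank (K := ZMod 2), Subspace.dual_finrank_eq,
      Subspace.dual_finrank_eq, ZMod.card]
    exact Nat.pow_le_pow_right (i := 5) two_pos (by omega)
  rw [← hmap] at h0 hcard ⊢
  rw [Multiset.card_map] at hcard
  have h0' : 0 ∉ coordinateMultiset D := fun h => h0 (map_zero f ▸ Multiset.mem_map_of_mem f h)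
  rcases hD.fourDivisible_coordinateMultiset.plane_add_line_or_tripleCone_of_span_eq_top h0' hcard
    (span_coordinateMultiset D) hdual with ⟨a, b, c, d, e, h⟩ | ⟨c, b, hb, h⟩
  · refine Or.inl ⟨f a, f b, f c, f d, f e, ?_⟩
    rw [h, Multiset.map_add, Multiset.map_nsmul, map_nonzeroCombinations, map_nonzeroCombinations,
      ← FinVec.map_eq, ← FinVec.map_eq]
    rfl
  · exact Or.inr ⟨f c, f ∘ b, by simpa using congrArg f hb, by rw [h, map_tripleCone]⟩

end Lifting

section Cones

variable {V : Type*} [AddCommGroup V] [Module (ZMod 2) V]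

lemma exists_univ_val_eq_of_ne {i j : Fin 5} (hij : i ≠ j) :
    ∃ k l m, (Finset.univ : Finset (Fin 5)).val = {i, j, k, l, m} := by
  decide +revert

lemma tripleCone_eq_plane_add_line {c : V} {b : Fin 5 → V} (hsum : ∑ i, b i = 0) {i j : Fin 5}
    (hij : i ≠ j) (h : b i + b j ∈ Submodule.span (ZMod 2) {c}) :
    ∃ k l, tripleCone c b
      = nonzeroCombinations ![c, b k, b l] + 2 • nonzeroCombinations ![b i, c] := by
  obtain ⟨k, l, m, huniv⟩ := exists_univ_val_eq_of_ne hij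
  have hrest : (b k + b l) + b m ∈ Submodule.span (ZMod 2) {c} := by
    have : (b i + b j) + ((b k + b l) + b m) = 0 := by
      rw [← hsum, Finset.sum_eq_multiset_sum, huniv]
      simp [add_assoc]
    rwa [← eq_of_sub_eq_zero ((ZModModule.sub_eq_add _ _).trans this)]
  refine ⟨k, l, ?_⟩
  have hcone : tripleCone c b = 3 • {c} + ({b i, b i + c} + ({b j, b j + c} + ({b k, b k + c} +
      ({b l, b l + c} + {b m, b m + c})))) := by
    rw [tripleCone, Finset.sum_eq_multiset_sum, huniv]
    simp
  rw [hcone, pair_add_eq_of_add_mem_span h, pair_add_eq_of_add_mem_span hrest,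
    nonzeroCombinations_triple, nonzeroCombinations_pair, add_comm c (b k), add_comm c (b l),
    add_right_comm (b k) c]
  simp only [Multiset.insert_eq_cons, ← Multiset.singleton_add]
  abel

lemma exists_eq_const_add_single (g : Fin 5 → ZMod 2) :
    ∃ e, g = (fun _ => e) ∨ (∃ i, g = (fun _ => e) + Pi.single i 1) ∨
      ∃ i j, i ≠ j ∧ g = (fun _ => e) + (Pi.single i 1 + Pi.single j 1) := by
  decide +revert

variable {b : Fin 5 → V} {U : Submodule (ZMod 2) V}

lemma eq_const_of_linearCombination_mem (hsum : ∑ i, b i = 0) (hU : ∀ i, b i ∉ U)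
    (hpair : Pairwise fun i j => b i + b j ∉ U) {g : Fin 5 → ZMod 2}
    (hg : Fintype.linearCombination (ZMod 2) b g ∈ U) : ∃ e, g = fun _ => e := by
  have hconst (e : ZMod 2) : Fintype.linearCombination (ZMod 2) b (fun _ => e) = 0 := by
    rw [Fintype.linearCombination_apply, ← Finset.smul_sum, hsum, smul_zero]
  obtain ⟨e, rfl | ⟨i, rfl⟩ | ⟨i, j, hij, rfl⟩⟩ := exists_eq_const_add_single g
  · exact ⟨e, rfl⟩
  · exact absurd (by simpa [hconst] using hg) (hU i)
  · exact absurd (by simpa [hconst] using hg) (hpair hij)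

lemma injective_of_pairwise_add_notMem (hpair : Pairwise fun i j => b i + b j ∉ U) :
    Function.Injective b := by
  intro i j hij
  by_contra hne
  exact hpair hne (by simp [hij, ZModModule.add_self])

lemma linearIndepOn_of_pairwise_add_notMem (hsum : ∑ i, b i = 0) (hU : ∀ i, b i ∉ U)
    (hpair : Pairwise fun i j => b i + b j ∉ U) {S : Finset (Fin 5)} (hS : S ≠ Finset.univ) :
    LinearIndepOn (ZMod 2) b S := by
  rw [linearIndepOn_finset_iff]
  intro g hg i hi
  obtain ⟨j, hj⟩ : ∃ j, j ∉ S := by simpa [Finset.eq_univ_iff_forall] using hS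
  obtain ⟨e, he⟩ := eq_const_of_linearCombination_mem hsum hU hpair
    (g := fun i => if i ∈ S then g i else 0) (by
      simp [Fintype.linearCombination_apply, ite_smul, Finset.sum_ite_mem, hg])
  have hei := congrFun he i
  have hej := congrFun he j
  simp only [hi, hj, if_true, if_false] at hei hej
  exact hei.trans hej.symm

lemma disjoint_span_range_of_pairwise_add_notMem (hsum : ∑ i, b i = 0) (hU : ∀ i, b i ∉ U)
    (hpair : Pairwise fun i j => b i + b j ∉ U) :
    Disjoint (Submodule.span (ZMod 2) (Set.range b)) U := by
  rw [Submodule.disjoint_def, ← Fintype.range_linearCombination]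
  rintro _ ⟨g, rfl⟩ hg
  obtain ⟨e, rfl⟩ := eq_const_of_linearCombination_mem hsum hU hpair hg
  rw [Fintype.linearCombination_apply, ← Finset.smul_sum, hsum, smul_zero]

end Cones

section TripleConeCount

variable {V ι : Type*} [AddCommGroup V] [Fintype ι] {c : V} {b : ι → V}

lemma vertex_ne_zero_of_zero_notMem_tripleCone (h0 : 0 ∉ tripleCone c b) : c ≠ 0 := by
  rintro rfl
  exact h0 (by simp [tripleCone])

lemma count_tripleCone (w : V) :
    (tripleCone c b).count w
      = 3 * (if w = c then 1 else 0) + ∑ i, Multiset.count w {b i, b i + c} := by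
  rw [tripleCone, Multiset.count_add, Multiset.count_nsmul, Multiset.count_singleton]
  exact congrArg _ (map_sum (Multiset.countAddMonoidHom w) _ _)

variable [Module (ZMod 2) V]

lemma notMem_span_of_zero_notMem_tripleCone (h0 : 0 ∉ tripleCone c b) (i : ι) :
    b i ∉ Submodule.span (ZMod 2) {c} := by
  have hmem {x : V} (hx : x ∈ ({b i, b i + c} : Multiset V)) : x ∈ tripleCone c b :=
    Multiset.mem_add.2 (Or.inr (Multiset.mem_sum.2 ⟨i, Finset.mem_univ i, hx⟩))
  intro h
  refine h0 ?_
  rcases mem_span_singleton_zmod_two.1 h with h | h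
  · exact hmem (by simp [h])
  · exact hmem (by simp [h, ZModModule.add_self])

lemma count_tripleCone_vertex (hb : ∀ i, b i ∉ Submodule.span (ZMod 2) {c}) :
    (tripleCone c b).count c = 3 := by
  have hcount (i : ι) : Multiset.count c {b i, b i + c} = 0 := by
    have hi := mt mem_span_singleton_zmod_two.2 (hb i)
    rw [Multiset.count_eq_zero]
    simpa [not_or, and_comm, eq_comm] using hi
  rw [count_tripleCone, if_pos rfl, mul_one, Finset.sum_eq_zero fun i _ => hcount i,
    add_zero]

lemma mem_span_sup_span_singleton_iff {x w : V} (hw : w ∉ Submodule.span (ZMod 2) {c}) :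
    w ∈ Submodule.span (ZMod 2) {x} ⊔ Submodule.span (ZMod 2) {c}
      ↔ x + w ∈ Submodule.span (ZMod 2) {c} := by
  constructor
  · intro h
    obtain ⟨y, hy, z, hz, rfl⟩ := Submodule.mem_sup.1 h
    rcases mem_span_singleton_zmod_two.1 hy with rfl | rfl
    · exact absurd (by rwa [zero_add]) hw
    · rwa [← add_assoc, ZModModule.add_self, zero_add]
  · intro h
    rw [← zero_add w, ← ZModModule.add_self x, add_assoc]
    exact Submodule.add_mem_sup (Submodule.mem_span_singleton_self x) h

lemma count_tripleCone_of_notMem_span (hc : c ≠ 0)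
    (hpair : Pairwise fun i j => b i + b j ∉ Submodule.span (ZMod 2) {c}) {w : V}
    (hw : w ∉ Submodule.span (ZMod 2) {c}) :
    (tripleCone c b).count w
      = if ∃ i, w ∈ Submodule.span (ZMod 2) {b i} ⊔ Submodule.span (ZMod 2) {c}
        then 1 else 0 := by
  have hwc : w ≠ c := ne_of_mem_of_not_mem (Submodule.mem_span_singleton_self c) hw |>.symm
  have hcount (i : ι) : Multiset.count w {b i, b i + c}
      = if b i + w ∈ Submodule.span (ZMod 2) {c} then 1 else 0 := by
    have hnodup : Multiset.Nodup {b i, b i + c} := by simpa using hc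
    rw [Multiset.count_eq_of_nodup hnodup]
    simp [add_mem_span_singleton_zmod_two_iff]
  simp only [count_tripleCone, hcount, if_neg hwc, mul_zero, zero_add,
    mem_span_sup_span_singleton_iff hw]
  split_ifs with h
  · obtain ⟨i, hi⟩ := h
    rw [Finset.sum_eq_single_of_mem i (Finset.mem_univ i), if_pos hi]
    refine fun j _ hji => if_neg fun hj => hpair hji ?_
    have := Submodule.add_mem _ hj hi
    rwa [add_add_add_comm, ZModModule.add_self w, add_zero] at this
  · exact Finset.sum_eq_zero fun i _ => if_neg fun hi => h ⟨i, hi⟩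

end TripleConeCount

section Points

open Module (finrank)

open scoped LinearAlgebra.Projectivization

lemma projectivization_submodule_le_iff_rep_mem {F V : Type*} [Field F] [AddCommGroup V]
    [Module F V] (P : ℙ F V) (K : Submodule F V) : P.submodule ≤ K ↔ P.rep ∈ K := by
  rw [P.submodule_eq, Submodule.span_singleton_le_iff_mem]

lemma projectivization_rep_injective {F V : Type*} [Field F] [AddCommGroup V] [Module F V] :
    Function.Injective (Projectivization.rep : ℙ F V → V) := by
  intro P Q h
  apply Projectivization.submodule_injective
  rw [P.submodule_eq, Q.submodule_eq, h]

lemma iSup_submodule_image_mk {F V ι : Type*} [Field F] [AddCommGroup V] [Module F V]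
    {b : ι → V} (hb : ∀ i, b i ≠ 0) (S : Finset ι) :
    ⨆ P ∈ S.image fun i => Projectivization.mk F (b i) (hb i), Projectivization.submodule P
      = Submodule.span F (b '' S) := by
  simp only [Finset.iSup_finset_image, Projectivization.submodule_mk]
  rw [← Submodule.span_iUnion₂, Set.image_eq_iUnion]
  rfl

variable {V : Type*} [AddCommGroup V] [Module (ZMod 2) V]

lemma rep_mk_zmod_two {x : V} (hx : x ≠ 0) : (Projectivization.mk (ZMod 2) x hx).rep = x := by
  obtain ⟨a, ha⟩ := Projectivization.exists_smul_eq_mk_rep (ZMod 2) x hx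
  rw [← ha, Subsingleton.elim a 1, one_smul]

section ProjectiveBase

variable {b : Fin 5 → V} {U : Submodule (ZMod 2) V}

lemma mk_zmod_two_injective (hb0 : ∀ i, b i ≠ 0) (hb : Function.Injective b) :
    Function.Injective fun i => Projectivization.mk (ZMod 2) (b i) (hb0 i) := by
  intro i j hij
  simpa only [rep_mk_zmod_two, hb.eq_iff] using congrArg Projectivization.rep hij

lemma isProjBase_image_mk (hsum : ∑ i, b i = 0) (hb0 : ∀ i, b i ≠ 0) (hU : ∀ i, b i ∉ U)
    (hpair : Pairwise fun i j => b i + b j ∉ U) :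
    IsProjBase 5 (Finset.univ.image fun i => Projectivization.mk (ZMod 2) (b i) (hb0 i)) := by
  have hinj := mk_zmod_two_injective hb0 (injective_of_pairwise_add_notMem hpair)
  refine ⟨by simp [Finset.card_image_of_injective _ hinj], fun T hT hTcard => ?_⟩
  obtain ⟨S, -, rfl⟩ := Finset.subset_image_iff.1 hT
  rw [Finset.card_image_of_injective _ hinj] at hTcard
  have hS : S ≠ Finset.univ := by
    rintro rfl
    simp at hTcard
  have hli := linearIndepOn_of_pairwise_add_notMem hsum hU hpair hS
  rw [iSup_submodule_image_mk, ← hTcard, Set.image_eq_range]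
  exact (finrank_span_eq_card hli).trans (Fintype.card_coe S)

end ProjectiveBase

/-- A multiset of points of `PG(V)` as a multiset of vectors: over `ZMod 2` each point has just one
nonzero representative. -/
noncomputable def pointMultiset [Fintype (ℙ (ZMod 2) V)] (M : ℙ (ZMod 2) V → ℕ) : Multiset V :=
  ∑ P, M P • {P.rep}

variable [Fintype (ℙ (ZMod 2) V)] (M : ℙ (ZMod 2) V → ℕ)

lemma count_rep_pointMultiset (Q : ℙ (ZMod 2) V) : (pointMultiset M).count Q.rep = M Q := by
  have hcount : (pointMultiset M).count Q.rep = ∑ P, (M P • ({P.rep} : Multiset V)).count Q.rep :=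
    map_sum (Multiset.countAddMonoidHom Q.rep) _ _
  simp [hcount, Multiset.count_singleton, projectivization_rep_injective.eq_iff]

lemma countP_mem_pointMultiset (K : Submodule (ZMod 2) V) :
    (pointMultiset M).countP (· ∈ K) = MVal M K := by
  have hcountP : (pointMultiset M).countP (· ∈ K)
      = ∑ P, (M P • ({P.rep} : Multiset V)).countP (· ∈ K) :=
    map_sum (Multiset.countPAddMonoidHom (· ∈ K)) _ _
  rw [hcountP, MVal, finsum_mem_def, finsum_eq_sum_of_fintype]
  refine Finset.sum_congr rfl fun P _ => ?_
  have hmem : P ∈ {P : ℙ (ZMod 2) V | P.submodule ≤ K} ↔ P.rep ∈ K :=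
    projectivization_submodule_le_iff_rep_mem P K
  simp only [Multiset.countP_nsmul, ← Multiset.cons_zero, Multiset.countP_cons,
    Multiset.countP_zero, zero_add, Set.indicator_apply, hmem, mul_ite, mul_one, mul_zero]

lemma card_pointMultiset : (pointMultiset M).card = MVal M ⊤ := by
  rw [← countP_mem_pointMultiset]
  simp

lemma zero_notMem_pointMultiset : 0 ∉ pointMultiset M := by
  intro h
  obtain ⟨P, -, hP⟩ := Multiset.mem_sum.1 h
  exact P.rep_nonzero (Multiset.mem_singleton.1 (Multiset.mem_of_mem_nsmul hP)).symm

variable {M}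

lemma IsDivisible.fourDivisible_pointMultiset [FiniteDimensional (ZMod 2) V]
    (hM : IsDivisible 4 M) : FourDivisible (pointMultiset M) := by
  intro φ
  rcases eq_or_ne φ 0 with rfl | hφ
  · simp [dualWeight]
  · have hker := hM (LinearMap.ker φ) (Module.Dual.finrank_ker_add_one_of_ne_zero hφ)
    have hadd := card_filter_apply_eq_zero_add_dualWeight (pointMultiset M) φ
    have hfilter : ((pointMultiset M).filter (φ · = 0)).card = MVal M (LinearMap.ker φ) := by
      simp only [← countP_mem_pointMultiset, Multiset.countP_eq_card_filter, LinearMap.mem_ker]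
    rw [hfilter, card_pointMultiset] at hadd
    rw [Nat.ModEq] at hker
    omega

lemma exists_plane_line_of_pointMultiset_eq {a b c d e : V}
    (hM : pointMultiset M = nonzeroCombinations ![a, b, c] + 2 • nonzeroCombinations ![d, e]) :
    ∃ E L : Submodule (ZMod 2) V, finrank (ZMod 2) E = 3 ∧ finrank (ZMod 2) L = 2 ∧
      ∀ Q, M Q = (if Q.submodule ≤ E then 1 else 0) + (if Q.submodule ≤ L then 2 else 0) := by
  have h0 := zero_notMem_pointMultiset M
  rw [hM, Multiset.mem_add, not_or, Multiset.mem_nsmul_of_ne_zero two_ne_zero] at h0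
  have hE := linearIndependent_of_zero_notMem_nonzeroCombinations h0.1
  have hL := linearIndependent_of_zero_notMem_nonzeroCombinations h0.2
  refine ⟨_, _, finrank_span_eq_card hE, finrank_span_eq_card hL, fun Q => ?_⟩
  rw [← count_rep_pointMultiset M, hM, Multiset.count_add, Multiset.count_nsmul,
    count_nonzeroCombinations hE Q.rep_nonzero, count_nonzeroCombinations hL Q.rep_nonzero]
  simp only [projectivization_submodule_le_iff_rep_mem, mul_ite, mul_one, mul_zero]

lemma exists_projBase_of_pointMultiset_eq {c : V} {b : Fin 5 → V} (hsum : ∑ i, b i = 0)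
    (hpair : Pairwise fun i j => b i + b j ∉ Submodule.span (ZMod 2) {c})
    (hM : pointMultiset M = tripleCone c b) :
    ∃ (B : Finset (ℙ (ZMod 2) V)) (C : ℙ (ZMod 2) V),
      IsProjBase 5 B ∧
      ¬ C.submodule ≤ (⨆ P ∈ B, Projectivization.submodule P) ∧
      M C = 3 ∧
      ∀ Q, Q ≠ C →
        M Q = if ∃ P ∈ B, Q.submodule ≤ Projectivization.submodule P ⊔ C.submodule
          then 1 else 0 := by
  have h0 := zero_notMem_pointMultiset M
  rw [hM] at h0
  have hc0 := vertex_ne_zero_of_zero_notMem_tripleCone h0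
  have hbc := notMem_span_of_zero_notMem_tripleCone h0
  have hb0 (i) : b i ≠ 0 := fun h => hbc i (h ▸ Submodule.zero_mem _)
  have hcount (Q) : M Q = (tripleCone c b).count Q.rep := hM ▸ (count_rep_pointMultiset M Q).symm
  refine ⟨_, .mk (ZMod 2) c hc0, isProjBase_image_mk hsum hb0 hbc hpair, ?_, ?_, fun Q hQ => ?_⟩
  · rw [iSup_submodule_image_mk, Finset.coe_univ, Set.image_univ,
      projectivization_submodule_le_iff_rep_mem, rep_mk_zmod_two]
    have hdisj := disjoint_span_range_of_pairwise_add_notMem hsum hbc hpair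
    exact fun h => hc0 (Submodule.disjoint_def.1 hdisj c h (Submodule.mem_span_singleton_self c))
  · rw [hcount, rep_mk_zmod_two, count_tripleCone_vertex hbc]
  · have hQc : Q.rep ∉ Submodule.span (ZMod 2) {c} := by
      rw [mem_span_singleton_zmod_two, not_or]
      refine ⟨Q.rep_nonzero, fun h => hQ (projectivization_rep_injective ?_)⟩
      rw [h, rep_mk_zmod_two]
    rw [hcount, count_tripleCone_of_notMem_span hc0 hpair hQc]
    simp [projectivization_submodule_le_iff_rep_mem]

end Points

theorem stmt_10_general {V : Type*} [AddCommGroup V] [Module (ZMod 2) V]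
    [FiniteDimensional (ZMod 2) V] (M : Projectivization (ZMod 2) V → ℕ)
    (hdiv : IsDivisible 4 M) (hcard : MVal M ⊤ = 13) :
    (∃ E L : Submodule (ZMod 2) V,
      Module.finrank (ZMod 2) E = 3 ∧ Module.finrank (ZMod 2) L = 2 ∧
      ∀ Q, M Q = (if Q.submodule ≤ E then 1 else 0) + (if Q.submodule ≤ L then 2 else 0)) ∨
    (∃ (B : Finset (Projectivization (ZMod 2) V)) (C : Projectivization (ZMod 2) V),
      IsProjBase 5 B ∧
      ¬ C.submodule ≤ (⨆ P ∈ B, Projectivization.submodule P) ∧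
      M C = 3 ∧
      ∀ Q, Q ≠ C →
        M Q = if ∃ P ∈ B, Q.submodule ≤ Projectivization.submodule P ⊔ C.submodule
          then 1 else 0) := by
  have : Finite V := Module.finite_of_finite (ZMod 2)
  have := Fintype.ofFinite (Projectivization (ZMod 2) V)
  rcases hdiv.fourDivisible_pointMultiset.plane_add_line_or_tripleCone (zero_notMem_pointMultiset M)
    (card_pointMultiset M ▸ hcard) with ⟨a, b, c, d, e, hM⟩ | ⟨c, b, hsum, hM⟩
  · exact Or.inl (exists_plane_line_of_pointMultiset_eq hM)
  · by_cases hpair : Pairwise fun i j => b i + b j ∉ Submodule.span (ZMod 2) {c}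
    · exact Or.inr (exists_projBase_of_pointMultiset_eq hsum hpair hM)
    · obtain ⟨i, j, hij, hmem⟩ : ∃ i j, i ≠ j ∧ b i + b j ∈ Submodule.span (ZMod 2) {c} := by
        simpa [Pairwise] using hpair
      obtain ⟨k, l, hcone⟩ := tripleCone_eq_plane_add_line hsum hij hmem
      exact Or.inl (exists_plane_line_of_pointMultiset_eq (hM.trans hcone))

theorem stmt_10 (v : ℕ) (M : Projectivization (ZMod 2) (Fin v → ZMod 2) → ℕ)
    (hdiv : IsDivisible 4 M) (hcard : MVal M ⊤ = 13) :
    (∃ E L : Submodule (ZMod 2) (Fin v → ZMod 2),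
      Module.finrank (ZMod 2) E = 3 ∧ Module.finrank (ZMod 2) L = 2 ∧
      ∀ Q, M Q = (if Q.submodule ≤ E then 1 else 0) + (if Q.submodule ≤ L then 2 else 0)) ∨
    (∃ (B : Finset (Projectivization (ZMod 2) (Fin v → ZMod 2)))
        (C : Projectivization (ZMod 2) (Fin v → ZMod 2)),
      IsProjBase 5 B ∧
      ¬ C.submodule ≤ (⨆ P ∈ B, Projectivization.submodule P) ∧
      M C = 3 ∧
      ∀ Q, Q ≠ C →
        M Q = if ∃ P ∈ B, Q.submodule ≤ Projectivization.submodule P ⊔ C.submodule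
          then 1 else 0) := stmt_10_general M hdiv hcard
end

section
/- There is no 8-divisible multiset of points in PG(v-1,2) of cardinality 27 with all point multiplicities at most 3. Equivalently, Γ_2(8,27) = 4: the minimum possible maximum point multiplicity of an 8-divisible multiset of cardinality 27 over F_2 equals 4. -/
open scoped Classical

/-!
The multiplicities of the hyperplanes of the pencil through a subspace of codimension two satisfy
one linear relation, so the restriction of a `q * Δ`-divisible multiset to a hyperplane is
`Δ`-divisible. Counting incidences gives the average of `MVal M H` over the hyperplanes through
(or avoiding) a point `P`, as well as the average of `(MVal M H) ^ 2`. Averages are taken over all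
linear functionals `h`, with `H = ker h`; the zero functional contributes the whole space.

A binary 8-divisible multiset of cardinality 27 thus has a hyperplane of multiplicity at most 13,
hence 3 or 11, and its restriction there is 4-divisible. A 4-divisible multiset cannot have
cardinality 3, since some hyperplane avoiding a point has at most half of the cardinality. In a
4-divisible multiset of cardinality 11, a point of multiplicity at most 3 lies on a hyperplane of
multiplicity 3, where the restriction is 2-divisible and therefore has multiplicities at most 1. If
no point had multiplicity 4 or more, `M` would be a set; but then the second moments give
`∑ (MVal M H - 3) * (MVal M H - 7) < 0`, although `MVal M H ≡ 3 [MOD 4]` makes every term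
nonnegative.

Conversely, `4 χ_L + χ_S` is 8-divisible of cardinality `4 * 3 + 15 = 27` for every line `L` and
every solid `S`, and it has maximum multiplicity 4 if `L` and `S` are disjoint.
-/

open Module (Dual finrank)
open scoped LinearAlgebra.Projectivization

section Multiset

variable {F V : Type*} [Field F] [AddCommGroup V] [Module F V]

/-- The restriction of the multiset of points `M` to the points of the subspace `K`, kept as a
multiset of points of the whole space. In particular `restrict 1 K` is the set of points of `K`,
written `χ_K` in the literature. -/
noncomputable def restrict (M : ℙ F V → ℕ) (K : Submodule F V) : ℙ F V → ℕ :=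
  {P : ℙ F V | P.submodule ≤ K}.indicator M

theorem restrict_apply_of_le (M : ℙ F V → ℕ) {K : Submodule F V} {P : ℙ F V}
    (hP : P.submodule ≤ K) : restrict M K P = M P :=
  Set.indicator_of_mem hP M

theorem restrict_apply_of_not_le (M : ℙ F V → ℕ) {K : Submodule F V} {P : ℙ F V}
    (hP : ¬P.submodule ≤ K) : restrict M K P = 0 :=
  Set.indicator_of_notMem hP M

theorem restrict_apply_le (M : ℙ F V → ℕ) (K : Submodule F V) (P : ℙ F V) :
    restrict M K P ≤ M P :=
  Set.indicator_apply_le' (fun _ ↦ le_rfl) (fun _ ↦ Nat.zero_le _)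

theorem MVal_restrict (M : ℙ F V → ℕ) (K H : Submodule F V) :
    MVal (restrict M K) H = MVal M (H ⊓ K) := by
  simp only [MVal, restrict, finsum_mem_def, Set.indicator_indicator, ← Set.ofPred_and, le_inf_iff]

theorem MVal_restrict_top (M : ℙ F V → ℕ) (K : Submodule F V) :
    MVal (restrict M K) ⊤ = MVal M K := by
  rw [MVal_restrict, top_inf_eq]

theorem MVal_eq_sum [Fintype (ℙ F V)] (M : ℙ F V → ℕ) (K : Submodule F V) :
    MVal M K = ∑ P, if P.submodule ≤ K then M P else 0 := by
  rw [MVal, finsum_mem_def, finsum_eq_sum_of_fintype]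
  simp only [Set.indicator_apply, Set.mem_ofPred_eq]

theorem MVal_top [Fintype (ℙ F V)] (M : ℙ F V → ℕ) : MVal M ⊤ = ∑ P, M P := by
  simp only [MVal_eq_sum, le_top, if_true]

theorem exists_pos_of_MVal_pos {M : ℙ F V → ℕ} {K : Submodule F V} (hM : 0 < MVal M K) :
    ∃ P, 0 < M P := by
  obtain ⟨P, -, hP⟩ := exists_ne_zero_of_finsum_mem_ne_zero hM.ne'
  exact ⟨P, Nat.pos_of_ne_zero hP⟩

theorem MVal_add [Finite V] (M N : ℙ F V → ℕ) (K : Submodule F V) :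
    MVal (M + N) K = MVal M K + MVal N K :=
  finsum_mem_add_distrib (Set.toFinite _)

theorem MVal_nsmul [Finite V] (m : ℕ) (M : ℙ F V → ℕ) (K : Submodule F V) :
    MVal (m • M) K = m * MVal M K :=
  (smul_finsum_mem (r := m) (f := M) (Set.toFinite _)).symm

theorem IsDivisible.add [Finite V] {Δ : ℕ} {M N : ℙ F V → ℕ} (hM : IsDivisible Δ M)
    (hN : IsDivisible Δ N) : IsDivisible Δ (M + N) := fun H hH ↦ by
  simpa only [MVal_add] using (hM H hH).add (hN H hH)

theorem IsDivisible.nsmul [Finite V] {Δ : ℕ} {M : ℙ F V → ℕ} (hM : IsDivisible Δ M) (m : ℕ) :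
    IsDivisible (m * Δ) (m • M) := fun H hH ↦ by
  simpa only [MVal_nsmul] using (hM H hH).mul_left' m

theorem exists_ker_eq_of_finrank_add_one_eq [FiniteDimensional F V] {H : Submodule F V}
    (hH : finrank F H + 1 = finrank F V) : ∃ h : Dual F V, LinearMap.ker h = H := by
  have H_lt : H < ⊤ := Submodule.lt_top_of_finrank_lt_finrank (by omega)
  obtain ⟨h, h_ne, H_le⟩ := H.exists_le_ker_of_lt_top H_lt
  have := Dual.finrank_ker_add_one_of_ne_zero h_ne
  exact ⟨h, (Submodule.eq_of_le_of_finrank_eq H_le (by omega)).symm⟩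

theorem isDivisible_iff_forall_ker [FiniteDimensional F V] {Δ : ℕ} {M : ℙ F V → ℕ} :
    IsDivisible Δ M ↔ ∀ h : Dual F V, MVal M (LinearMap.ker h) ≡ MVal M ⊤ [MOD Δ] := by
  constructor
  · intro hM h
    obtain rfl | h_ne := eq_or_ne h 0
    · rw [LinearMap.ker_zero]
    · exact hM _ (Dual.finrank_ker_add_one_of_ne_zero h_ne)
  · intro hM H hH
    obtain ⟨h, rfl⟩ := exists_ker_eq_of_finrank_add_one_eq hH
    exact hM h

theorem submodule_le_ker_iff (P : ℙ F V) (h : Dual F V) :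
    P.submodule ≤ LinearMap.ker h ↔ h P.rep = 0 := by
  rw [P.submodule_eq, Submodule.span_singleton_le_iff_mem, LinearMap.mem_ker]

theorem isAtom_submodule (P : ℙ F V) : IsAtom P.submodule :=
  Submodule.isAtom_iff_finrank_eq_one.2 P.finrank_submodule

theorem not_submodule_le_of_disjoint {K L : Submodule F V} (hKL : Disjoint K L) {P : ℙ F V}
    (hP : P.submodule ≤ K) : ¬P.submodule ≤ L := fun hL ↦
  (isAtom_submodule P).1 (le_bot_iff.1 (hKL hP hL))

theorem finrank_submodule_sup_submodule {P Q : ℙ F V} (hPQ : P ≠ Q) :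
    finrank F ↥(P.submodule ⊔ Q.submodule) = 2 := by
  have disjoint : Disjoint P.submodule Q.submodule := (isAtom_submodule P).disjoint_of_ne
    (isAtom_submodule Q) (Projectivization.submodule_injective.ne hPQ)
  have := Submodule.finrank_sup_add_finrank_inf_eq P.submodule Q.submodule
  rwa [disjoint.eq_bot, finrank_bot, add_zero, P.finrank_submodule, Q.finrank_submodule] at this

end Multiset

section Restriction

theorem card_filter_add_mul_eq_zero {F : Type*} [Field F] [Fintype F] (a b : F) :
    (if b = 0 then 1 else 0) + Finset.card {c : F | a + c * b = 0} =
      1 + Nat.card F * if a = 0 ∧ b = 0 then 1 else 0 := by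
  by_cases hb : b = 0
  · by_cases ha : a = 0 <;> simp [ha, hb]
  · have card_eq_one : Finset.card {c : F | a + c * b = 0} = 1 := by
      refine Finset.card_eq_one.2 ⟨-a / b, ?_⟩
      ext c
      simp [eq_div_iff hb, add_comm a, add_eq_zero_iff_eq_neg]
    simp [hb, card_eq_one]

variable {F V : Type*} [Field F] [AddCommGroup V] [Module F V] [Finite V]

local notation "q" => Nat.card F

-- For independent `h` and `k`, the left-hand side runs over the hyperplanes of the pencil through
-- `ker h ⊓ ker k`: it counts the points of the axis `q + 1` times and the others once.
theorem MVal_pencil [Fintype F] (M : ℙ F V → ℕ) (h k : Dual F V) :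
    MVal M (LinearMap.ker k) + ∑ c : F, MVal M (LinearMap.ker (h + c • k)) =
      MVal M ⊤ + q * MVal M (LinearMap.ker h ⊓ LinearMap.ker k) := by
  cases nonempty_fintype (ℙ F V)
  simp only [MVal_eq_sum, le_top, if_true, le_inf_iff, submodule_le_ker_iff]
  rw [Finset.sum_comm, Finset.mul_sum, ← Finset.sum_add_distrib, ← Finset.sum_add_distrib]
  refine Finset.sum_congr rfl fun P _ ↦ ?_
  have weighted := congrArg (· * M P) (card_filter_add_mul_eq_zero (h P.rep) (k P.rep))
  simp only [Finset.card_filter, add_mul, Finset.sum_mul, mul_assoc, ite_mul, one_mul,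
    zero_mul] at weighted
  exact weighted

theorem IsDivisible.restrict_ker [Finite F] {Δ : ℕ} {M : ℙ F V → ℕ} (hM : IsDivisible (q * Δ) M)
    (k : Dual F V) : IsDivisible Δ (restrict M (LinearMap.ker k)) := by
  cases nonempty_fintype F
  rw [isDivisible_iff_forall_ker] at hM ⊢
  intro h
  rw [MVal_restrict, MVal_restrict_top]
  have pencil_modEq : MVal M (LinearMap.ker k) + ∑ c : F, MVal M (LinearMap.ker (h + c • k)) ≡
      MVal M ⊤ + q * MVal M ⊤ [MOD q * Δ] := by
    refine (hM k).add ?_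
    simpa using Nat.ModEq.sum fun c (_ : c ∈ Finset.univ) ↦ hM (h + c • k)
  rw [MVal_pencil] at pencil_modEq
  have axis_modEq : MVal M (LinearMap.ker h ⊓ LinearMap.ker k) ≡ MVal M ⊤ [MOD Δ] :=
    Nat.ModEq.mul_left_cancel' Nat.card_pos.ne' (Nat.ModEq.add_left_cancel' _ pencil_modEq)
  exact axis_modEq.trans ((hM k).of_mul_left q).symm

end Restriction

section Averages

variable {F V : Type*} [Field F] [AddCommGroup V] [Module F V]

local notation "q" => Nat.card F

theorem sum_MVal_ker_eq_sum_mul_card [Fintype (ℙ F V)] (M : ℙ F V → ℕ) (T : Finset (Dual F V)) :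
    ∑ h ∈ T, MVal M (LinearMap.ker h) =
      ∑ Q, M Q * Finset.card {h ∈ T | Q.submodule ≤ LinearMap.ker h} := by
  simp only [MVal_eq_sum, Finset.card_filter, Finset.mul_sum, mul_ite, mul_one, mul_zero]
  exact Finset.sum_comm

theorem card_dualAnnihilator_mul [FiniteDimensional F V] (K : Submodule F V) :
    Nat.card K.dualAnnihilator * q ^ finrank F K = Nat.card (Dual F V) := by
  rw [Module.natCard_eq_pow_finrank (K := F) (V := Dual F V),
    Module.natCard_eq_pow_finrank (K := F) (V := K.dualAnnihilator), Subspace.dual_finrank_eq,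
    ← pow_add, add_comm, Subspace.finrank_add_finrank_dualAnnihilator_eq]

theorem card_filter_le_ker_mul [FiniteDimensional F V] [Fintype (Dual F V)]
    (K : Submodule F V) :
    Finset.card {h : Dual F V | K ≤ LinearMap.ker h} * q ^ finrank F K = Nat.card (Dual F V) := by
  rw [← card_dualAnnihilator_mul K, ← Fintype.card_subtype, ← Nat.card_eq_fintype_card]
  refine congrArg (· * _) (Nat.card_congr (Equiv.subtypeEquivRight fun h ↦ ?_))
  simp only [SetLike.le_def, LinearMap.mem_ker, Submodule.mem_dualAnnihilator]

theorem card_filter_both_le_ker [FiniteDimensional F V] [Fintype (Dual F V)] (P Q : ℙ F V) :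
    q ^ 2 * Finset.card {h : Dual F V | P.submodule ≤ LinearMap.ker h ∧
      Q.submodule ≤ LinearMap.ker h} = Nat.card (Dual F V) * if P = Q then q else 1 := by
  simp only [← sup_le_iff]
  split_ifs with hPQ
  · subst hPQ
    rw [sup_idem, ← card_filter_le_ker_mul P.submodule, P.finrank_submodule]
    ring
  · rw [← card_filter_le_ker_mul (P.submodule ⊔ Q.submodule), finrank_submodule_sup_submodule hPQ]
    ring

theorem card_filter_not_le_ker [FiniteDimensional F V] [Fintype (Dual F V)] (P : ℙ F V) :
    q * (Finset.card {h : Dual F V | ¬P.submodule ≤ LinearMap.ker h} : ℤ) =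
      Nat.card (Dual F V) * (q - 1) := by
  have le_count := card_filter_le_ker_mul P.submodule
  have total := Finset.card_filter_add_card_filter_not (s := (Finset.univ : Finset (Dual F V)))
    (fun h ↦ P.submodule ≤ LinearMap.ker h)
  rw [P.finrank_submodule, pow_one] at le_count
  rw [Finset.card_univ, ← Nat.card_eq_fintype_card] at total
  zify at le_count total
  linear_combination q * total - le_count

variable [Finite V] [Fintype (Dual F V)]

theorem sum_MVal_ker (M : ℙ F V → ℕ) :
    q * ∑ h : Dual F V, MVal M (LinearMap.ker h) = Nat.card (Dual F V) * MVal M ⊤ := by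
  cases nonempty_fintype (ℙ F V)
  rw [sum_MVal_ker_eq_sum_mul_card, MVal_top, Finset.mul_sum, Finset.mul_sum]
  refine Finset.sum_congr rfl fun P _ ↦ ?_
  rw [← card_filter_le_ker_mul P.submodule, P.finrank_submodule]
  ring

theorem sum_MVal_ker_of_submodule_le (M : ℙ F V → ℕ) (P : ℙ F V) :
    (q : ℤ) ^ 2 * ∑ h : Dual F V with P.submodule ≤ LinearMap.ker h,
      (MVal M (LinearMap.ker h) : ℤ) =
        Nat.card (Dual F V) * (MVal M ⊤ + (q - 1) * M P) := by
  cases nonempty_fintype (ℙ F V)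
  have weighted (Q : ℙ F V) : (q : ℤ) ^ 2 * (M Q * Finset.card {h : Dual F V |
      P.submodule ≤ LinearMap.ker h ∧ Q.submodule ≤ LinearMap.ker h}) =
        Nat.card (Dual F V) * (M Q + (q - 1) * if P = Q then (M Q : ℤ) else 0) := by
    have := congrArg (Nat.cast (R := ℤ)) (card_filter_both_le_ker P Q)
    push_cast at this
    rw [mul_left_comm, this]
    split_ifs <;> ring
  rw [← Nat.cast_sum, sum_MVal_ker_eq_sum_mul_card, MVal_top]
  push_cast
  simp only [Finset.filter_filter]
  rw [Finset.mul_sum, Finset.sum_congr rfl fun Q _ ↦ weighted Q, ← Finset.mul_sum,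
    Finset.sum_add_distrib, ← Finset.mul_sum, Finset.sum_ite_eq, if_pos (Finset.mem_univ P)]

theorem sum_MVal_ker_sq [Fintype (ℙ F V)] (M : ℙ F V → ℕ) :
    (q : ℤ) ^ 2 * ∑ h : Dual F V, (MVal M (LinearMap.ker h) : ℤ) ^ 2 =
      Nat.card (Dual F V) * (MVal M ⊤ ^ 2 + (q - 1) * ∑ P, M P ^ 2) := by
  have sum_through : ∑ h : Dual F V, (MVal M (LinearMap.ker h) : ℤ) ^ 2 = ∑ P : ℙ F V, M P *
      ∑ h : Dual F V with P.submodule ≤ LinearMap.ker h, (MVal M (LinearMap.ker h) : ℤ) := by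
    simp only [Finset.mul_sum, Finset.sum_filter]
    rw [Finset.sum_comm]
    refine Finset.sum_congr rfl fun h _ ↦ ?_
    rw [sq]
    nth_rw 1 [MVal_eq_sum]
    push_cast
    rw [Finset.sum_mul]
    simp only [ite_mul, mul_ite, zero_mul, mul_zero]
  rw [sum_through, Finset.mul_sum]
  calc ∑ P : ℙ F V, (q : ℤ) ^ 2 * (M P * ∑ h : Dual F V with P.submodule ≤ LinearMap.ker h,
        (MVal M (LinearMap.ker h) : ℤ))
      = ∑ P : ℙ F V, Nat.card (Dual F V) * ((M P : ℤ) * MVal M ⊤ + (q - 1) * (M P : ℤ) ^ 2) := by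
        refine Finset.sum_congr rfl fun P _ ↦ ?_
        rw [mul_left_comm, sum_MVal_ker_of_submodule_le]
        ring
    _ = Nat.card (Dual F V) * (MVal M ⊤ ^ 2 + (q - 1) * ∑ P, M P ^ 2) := by
        rw [← Finset.mul_sum, Finset.sum_add_distrib, ← Finset.sum_mul, ← Finset.mul_sum,
          MVal_top]
        push_cast
        ring

theorem sum_MVal_ker_sq_of_apply_le_one {M : ℙ F V → ℕ} (hM : ∀ P, M P ≤ 1) :
    (q : ℤ) ^ 2 * ∑ h : Dual F V, (MVal M (LinearMap.ker h) : ℤ) ^ 2 =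
      Nat.card (Dual F V) * (MVal M ⊤ * (MVal M ⊤ + q - 1)) := by
  cases nonempty_fintype (ℙ F V)
  have sum_sq : ∑ P, M P ^ 2 = MVal M ⊤ := by
    rw [MVal_top]
    refine Finset.sum_congr rfl fun P _ ↦ ?_
    obtain hP | hP := Nat.le_one_iff_eq_zero_or_eq_one.1 (hM P)
    · rw [hP, zero_pow two_ne_zero]
    · rw [hP, one_pow]
  rw [sum_MVal_ker_sq, sum_sq]
  ring

end Averages

section Existence

variable {F V : Type*} [Field F] [Finite F] [AddCommGroup V] [Module F V] [Finite V]

local notation "q" => Nat.card F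

theorem exists_submodule_le_ker_and_MVal_lt {M : ℙ F V → ℕ} {P : ℙ F V} (hP : M P < MVal M ⊤) :
    ∃ h : Dual F V, P.submodule ≤ LinearMap.ker h ∧
      q * MVal M (LinearMap.ker h) + M P < MVal M ⊤ + q * M P := by
  have : Finite (Dual F V) := Module.finite_of_finite F
  cases nonempty_fintype (Dual F V)
  by_contra! h_le
  have one_lt_q : 1 < q := Finite.one_lt_card
  have sum_lt : ∑ h : Dual F V with P.submodule ≤ LinearMap.ker h, (MVal M ⊤ + q * M P) <
      ∑ h : Dual F V with P.submodule ≤ LinearMap.ker h,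
        (q * MVal M (LinearMap.ker h) + M P) := by
    refine Finset.sum_lt_sum (fun h hh ↦ h_le h (Finset.mem_filter.1 hh).2) ⟨0, by simp, ?_⟩
    rw [LinearMap.ker_zero]
    nlinarith
  have count := card_filter_le_ker_mul P.submodule
  have average := sum_MVal_ker_of_submodule_le M P
  rw [P.finrank_submodule, pow_one] at count
  simp only [Finset.sum_add_distrib, Finset.sum_const, ← Finset.mul_sum, smul_eq_mul] at sum_lt
  zify at sum_lt count one_lt_q
  refine (mul_lt_mul_of_pos_left sum_lt (zero_lt_one.trans one_lt_q)).ne ?_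
  linear_combination (MVal M ⊤ + (q - 1) * (M P : ℤ)) * count - average

theorem exists_not_submodule_le_ker_and_MVal_le (M : ℙ F V → ℕ) (P : ℙ F V) :
    ∃ h : Dual F V, ¬P.submodule ≤ LinearMap.ker h ∧
      q * MVal M (LinearMap.ker h) + M P ≤ MVal M ⊤ := by
  have : Finite (Dual F V) := Module.finite_of_finite F
  cases nonempty_fintype (Dual F V)
  by_contra! lt_h
  have one_lt_q : 1 < q := Finite.one_lt_card
  have count := card_filter_not_le_ker P
  have first_moment := sum_MVal_ker M
  have average := sum_MVal_ker_of_submodule_le M P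
  have total := Finset.sum_filter_add_sum_filter_not Finset.univ
    (fun h : Dual F V ↦ P.submodule ≤ LinearMap.ker h) fun h ↦ (MVal M (LinearMap.ker h) : ℤ)
  have card_pos : 0 < Nat.card (Dual F V) := Nat.card_pos
  zify at one_lt_q first_moment card_pos
  have nonempty : (Finset.univ.filter fun h : Dual F V ↦ ¬P.submodule ≤ LinearMap.ker h).Nonempty :=
    Finset.card_pos.1 (by zify; nlinarith)
  have sum_lt := Finset.sum_lt_sum_of_nonempty nonempty fun h hh ↦ lt_h h (Finset.mem_filter.1 hh).2
  simp only [Finset.sum_add_distrib, Finset.sum_const, ← Finset.mul_sum, smul_eq_mul] at sum_lt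
  zify at sum_lt
  refine (mul_lt_mul_of_pos_left sum_lt (zero_lt_one.trans one_lt_q)).ne ?_
  linear_combination (MVal M ⊤ - (M P : ℤ)) * count - q ^ 2 * total - q * first_moment + average

theorem IsDivisible.apply_add_mul_mod_le {Δ : ℕ} {M : ℙ F V → ℕ} (hM : IsDivisible Δ M)
    (P : ℙ F V) : M P + q * (MVal M ⊤ % Δ) ≤ MVal M ⊤ := by
  obtain ⟨h, -, h_le⟩ := exists_not_submodule_le_ker_and_MVal_le M P
  have mod_le : MVal M ⊤ % Δ ≤ MVal M (LinearMap.ker h) :=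
    (isDivisible_iff_forall_ker.1 hM h).symm ▸ Nat.mod_le _ _
  have := Nat.mul_le_mul_left q mod_le
  omega

end Existence

section Subspaces

variable {F V : Type*} [Field F] [AddCommGroup V] [Module F V]

theorem exists_disjoint_of_finrank {a b : ℕ} (hab : a + b ≤ finrank F V) :
    ∃ K L : Submodule F V, finrank F K = a ∧ finrank F L = b ∧ Disjoint K L := by
  obtain ⟨x, hx⟩ := exists_linearIndependent_of_le_finrank hab
  obtain ⟨hK, hL, disjoint⟩ :=
    linearIndependent_sum.1 (hx.comp finSumFinEquiv finSumFinEquiv.injective)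
  exact ⟨_, _, by rw [finrank_span_eq_card hK, Fintype.card_fin],
    by rw [finrank_span_eq_card hL, Fintype.card_fin], disjoint⟩

theorem range_map_subtype (K : Submodule F V) :
    Set.range (Projectivization.map K.subtype K.injective_subtype) =
      {P : ℙ F V | P.submodule ≤ K} := by
  refine Set.Subset.antisymm ?_ fun P hP ↦ ?_
  · rintro _ ⟨Q, rfl⟩
    induction Q using Projectivization.ind with
    | h w hw =>
      rw [Set.mem_ofPred_eq, Projectivization.map_mk, Projectivization.submodule_mk,
        Submodule.span_singleton_le_iff_mem]
      exact w.2
  · rw [Set.mem_ofPred_eq, P.submodule_eq, Submodule.span_singleton_le_iff_mem] at hP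
    exact ⟨Projectivization.mk F ⟨P.rep, hP⟩ (Subtype.coe_ne_coe.1 P.rep_nonzero), P.mk_rep⟩

variable [Finite F] [Finite V]

local notation "q" => Nat.card F

theorem MVal_one (K : Submodule F V) : MVal 1 K = gaussNum q (finrank F K) := by
  cases nonempty_fintype (ℙ F K)
  rw [MVal, ← range_map_subtype,
    finsum_mem_range (Projectivization.map_injective _ K.injective_subtype),
    finsum_eq_sum_of_fintype]
  simp only [Pi.one_apply]
  rw [Finset.sum_const, smul_eq_mul, mul_one, Finset.card_univ, ← Nat.card_eq_fintype_card,
    Projectivization.card_of_finrank F K rfl, gaussNum]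

theorem isDivisible_restrict_one {K : Submodule F V} {k : ℕ} (hK : finrank F K = k + 1) :
    IsDivisible (q ^ k) (restrict 1 K) := by
  intro H hH
  rw [MVal_restrict, MVal_restrict_top, MVal_one, MVal_one, hK]
  have le_sup : finrank F ↥(H ⊔ K) ≤ finrank F V := Submodule.finrank_le _
  have le_K : finrank F ↥(H ⊓ K) ≤ finrank F K := Submodule.finrank_mono inf_le_right
  have := Submodule.finrank_sup_add_finrank_inf_eq H K
  obtain h | h : finrank F ↥(H ⊓ K) = k ∨ finrank F ↥(H ⊓ K) = k + 1 := by omega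
  · rw [h, gaussNum, gaussNum, Finset.sum_range_succ]
    exact Nat.ModEq.symm (Nat.add_modEq_right)
  · rw [h]

end Subspaces

section Binary

variable {V : Type*} [AddCommGroup V] [Module (ZMod 2) V] [Finite V] {M : ℙ (ZMod 2) V → ℕ}

theorem apply_le_one_of_isDivisible_two (hM : IsDivisible 2 M) (hcard : MVal M ⊤ = 3)
    (P : ℙ (ZMod 2) V) : M P ≤ 1 := by
  have := hM.apply_add_mul_mod_le P
  rw [hcard, Nat.card_zmod] at this
  omega

theorem not_isDivisible_four_of_MVal_top_eq_three (hcard : MVal M ⊤ = 3) : ¬IsDivisible 4 M := by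
  intro hM
  obtain ⟨P, -⟩ := exists_pos_of_MVal_pos (M := M) (K := ⊤) (by omega)
  have := hM.apply_add_mul_mod_le P
  rw [hcard, Nat.card_zmod] at this
  omega

theorem apply_le_one_of_isDivisible_four (hM : IsDivisible 4 M) (hcard : MVal M ⊤ = 11)
    {P : ℙ (ZMod 2) V} (hP : M P ≤ 3) : M P ≤ 1 := by
  obtain ⟨h, P_le, h_lt⟩ := exists_submodule_le_ker_and_MVal_lt (M := M) (P := P) (by omega)
  have h_modEq := isDivisible_iff_forall_ker.1 hM h
  rw [Nat.card_zmod, hcard] at h_lt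
  rw [hcard, Nat.ModEq] at h_modEq
  have h_card : MVal (restrict M (LinearMap.ker h)) ⊤ = 3 := by
    rw [MVal_restrict_top]
    omega
  have h_divisible : IsDivisible 2 (restrict M (LinearMap.ker h)) :=
    IsDivisible.restrict_ker (by rwa [Nat.card_zmod]) h
  rw [← restrict_apply_of_le M P_le]
  exact apply_le_one_of_isDivisible_two h_divisible h_card P

theorem exists_one_lt_of_isDivisible_four (hM : IsDivisible 4 M) (hcard : MVal M ⊤ = 11) :
    ∃ P, 1 < M P := by
  by_contra! hle
  have : Finite (Dual (ZMod 2) V) := Module.finite_of_finite (ZMod 2)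
  cases nonempty_fintype (Dual (ZMod 2) V)
  have first_moment := sum_MVal_ker M
  have second_moment := sum_MVal_ker_sq_of_apply_le_one hle
  rw [hcard, Nat.card_zmod] at first_moment
  rw [hcard, Nat.card_zmod] at second_moment
  have nonneg : 0 ≤ ∑ h : Dual (ZMod 2) V,
      ((MVal M (LinearMap.ker h) : ℤ) - 3) * (MVal M (LinearMap.ker h) - 7) := by
    refine Finset.sum_nonneg fun h _ ↦ ?_
    have h_modEq := isDivisible_iff_forall_ker.1 hM h
    rw [hcard, Nat.ModEq] at h_modEq
    obtain h_le | h_ge : MVal M (LinearMap.ker h) ≤ 3 ∨ 7 ≤ MVal M (LinearMap.ker h) := by omega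
    · exact mul_nonneg_of_nonpos_of_nonpos (by omega) (by omega)
    · exact mul_nonneg (by omega) (by omega)
  have expand : ∑ h : Dual (ZMod 2) V,
      ((MVal M (LinearMap.ker h) : ℤ) - 3) * (MVal M (LinearMap.ker h) - 7) =
        -Nat.card (Dual (ZMod 2) V) := by
    have expand_term (x : ℤ) : (x - 3) * (x - 7) = x ^ 2 - 10 * x + 21 := by ring
    simp only [expand_term, Finset.sum_add_distrib, Finset.sum_sub_distrib, ← Finset.mul_sum,
      Finset.sum_const, Finset.card_univ, ← Nat.card_eq_fintype_card, nsmul_eq_mul]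
    zify at first_moment
    push_cast at second_moment
    linarith
  have card_pos : 0 < Nat.card (Dual (ZMod 2) V) := Nat.card_pos
  omega

theorem exists_four_le_of_isDivisible_four (hM : IsDivisible 4 M) (hcard : MVal M ⊤ = 11) :
    ∃ P, 4 ≤ M P := by
  obtain ⟨P, hP⟩ := exists_one_lt_of_isDivisible_four hM hcard
  refine ⟨P, ?_⟩
  by_contra! P_lt
  have := apply_le_one_of_isDivisible_four hM hcard (Nat.le_of_lt_succ P_lt)
  omega

theorem exists_four_le_of_isDivisible_eight (hM : IsDivisible 8 M) (hcard : MVal M ⊤ = 27) :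
    ∃ P, 4 ≤ M P := by
  obtain ⟨P, -⟩ := exists_pos_of_MVal_pos (M := M) (K := ⊤) (by omega)
  obtain ⟨h, -, h_le⟩ := exists_not_submodule_le_ker_and_MVal_le M P
  have h_modEq := isDivisible_iff_forall_ker.1 hM h
  rw [Nat.card_zmod, hcard] at h_le
  rw [hcard, Nat.ModEq] at h_modEq
  have h_divisible : IsDivisible 4 (restrict M (LinearMap.ker h)) :=
    IsDivisible.restrict_ker (by rwa [Nat.card_zmod]) h
  obtain h_card | h_card : MVal M (LinearMap.ker h) = 3 ∨ MVal M (LinearMap.ker h) = 11 := by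
    omega
  · rw [← MVal_restrict_top] at h_card
    exact absurd h_divisible (not_isDivisible_four_of_MVal_top_eq_three h_card)
  · rw [← MVal_restrict_top] at h_card
    obtain ⟨Q, hQ⟩ := exists_four_le_of_isDivisible_four h_divisible h_card
    exact ⟨Q, hQ.trans (restrict_apply_le _ _ _)⟩

theorem exists_isDivisible_eight_of_six_le_finrank (hV : 6 ≤ finrank (ZMod 2) V) :
    ∃ M : ℙ (ZMod 2) V → ℕ, IsDivisible 8 M ∧ MVal M ⊤ = 27 ∧ ∀ P, M P ≤ 4 := by
  obtain ⟨L, S, hL, hS, disjoint⟩ := exists_disjoint_of_finrank (a := 2) (b := 4) hV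
  have hL_div := (isDivisible_restrict_one hL).nsmul 4
  have hS_div := isDivisible_restrict_one hS
  rw [Nat.card_zmod] at hL_div hS_div
  refine ⟨4 • restrict 1 L + restrict 1 S, hL_div.add hS_div, ?_, fun P ↦ ?_⟩
  · rw [MVal_add, MVal_nsmul, MVal_restrict_top, MVal_restrict_top, MVal_one, MVal_one, hL, hS,
      Nat.card_zmod]
    decide
  · change 4 * restrict 1 L P + restrict 1 S P ≤ 4
    have le_one_L : restrict 1 L P ≤ 1 := restrict_apply_le 1 L P
    have le_one_S : restrict 1 S P ≤ 1 := restrict_apply_le 1 S P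
    by_cases hP : P.submodule ≤ L
    · rw [restrict_apply_of_not_le 1 (not_submodule_le_of_disjoint disjoint hP)]
      omega
    · rw [restrict_apply_of_not_le 1 hP]
      omega

end Binary

theorem stmt_16_general {V : Type*} [AddCommGroup V] [Module (ZMod 2) V] [Finite V] :
    (∀ M : ℙ (ZMod 2) V → ℕ, IsDivisible 8 M → MVal M ⊤ = 27 → ∃ P, 4 ≤ M P) ∧
    (6 ≤ finrank (ZMod 2) V →
      ∃ M : ℙ (ZMod 2) V → ℕ, IsDivisible 8 M ∧ MVal M ⊤ = 27 ∧ ∀ P, M P ≤ 4) :=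
  ⟨fun _ ↦ exists_four_le_of_isDivisible_eight, exists_isDivisible_eight_of_six_le_finrank⟩

theorem stmt_16 :
    (∀ (v : ℕ) (M : Projectivization (ZMod 2) (Fin v → ZMod 2) → ℕ),
      IsDivisible 8 M → MVal M ⊤ = 27 → ¬ (∀ P, M P ≤ 3)) ∧
    (∃ (v : ℕ) (M : Projectivization (ZMod 2) (Fin v → ZMod 2) → ℕ),
      IsDivisible 8 M ∧ MVal M ⊤ = 27 ∧ ∀ P, M P ≤ 4) := by
  refine ⟨fun v M hM hcard hle ↦ ?_, 6, stmt_16_general.2 (by simp)⟩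
  obtain ⟨P, hP⟩ := stmt_16_general.1 M hM hcard
  exact absurd (hle P) (by omega)
end
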